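/- If G is a finite group, then there is an integer M_G such that for every integer u with u ≥ M_G and u ≡ 1 or 3 (mod 6), there exists a Steiner triple system U on u points whose automorphism group Aut U is isomorphic to G. -/

import Mathlib

open Finset

noncomputable section
open scoped Classical

/-- `T` is the set of triples of a Steiner triple system on the finite type `α`:
every pair of distinct points lies in exactly one triple. -/
def IsSTS {α : Type*} (T : Finset (Finset α)) : Prop :=
  (∀ t ∈ T, t.card = 3) ∧
    ∀ p q : α, p ≠ q → ∃! t : Finset α, t ∈ T ∧ p ∈ t ∧ q ∈ t

/-- `T` is the set of triples of a partial Steiner triple system on `α`: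
every pair of distinct points lies in at most one triple. -/
def IsPSTS {α : Type*} (T : Finset (Finset α)) : Prop :=
  (∀ t ∈ T, t.card = 3) ∧
    ∀ p q : α, p ≠ q → ∀ t₁ ∈ T, ∀ t₂ ∈ T, p ∈ t₁ → q ∈ t₁ → p ∈ t₂ → q ∈ t₂ → t₁ = t₂

/-- `W` is a (closed) subsystem of the triple system `T`. -/
def IsSub {α : Type*} (T : Finset (Finset α)) (W : Finset α) : Prop :=
  ∀ t ∈ T, 2 ≤ (t ∩ W).card → t ⊆ W

/-- `g` is an automorphism of the triple system `T`. -/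
def IsAut {α : Type*} (T : Finset (Finset α)) (g : Equiv.Perm α) : Prop :=
  ∀ t : Finset α, t ∈ T ↔ t.image g ∈ T

/-- The automorphism group of a triple system, as a subgroup of the permutation group. -/
def autGroup {α : Type*} (T : Finset (Finset α)) : Subgroup (Equiv.Perm α) where
  carrier := {g : Equiv.Perm α | IsAut T g}
  one_mem' := by
    intro t
    simp
  mul_mem' := by
    intro a b ha hb t
    have h1 := hb t
    have h2 := ha (t.image b)
    have key : t.image ⇑(a * b) = (t.image ⇑b).image ⇑a := by
      rw [Equiv.Perm.coe_mul, Finset.image_image]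
    rw [key, ← h2]
    exact h1
  inv_mem' := by
    intro a ha t
    have h := ha (t.image ⇑a⁻¹)
    have key : (t.image ⇑a⁻¹).image ⇑a = t := by
      rw [Finset.image_image]
      have hc : (⇑a ∘ ⇑a⁻¹) = id := by
        funext x
        simp
      rw [hc, Finset.image_id]
    rw [key] at h
    exact h.symm

/-- `φ` embeds the triple system `S` onto a subsystem of `T`: it is injective, maps
triples of `S` to triples of `T`, and the triples of `T` inside the image of `φ` are
precisely the images of the triples of `S`. -/
def IsCopy {α β : Type*} [Fintype α] (S : Finset (Finset α)) (T : Finset (Finset β))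
    (φ : α → β) : Prop :=
  Function.Injective φ ∧ (∀ s ∈ S, s.image φ ∈ T) ∧
    ∀ t ∈ T, t ⊆ Finset.univ.image φ → ∃ s ∈ S, t = s.image φ

/-- The point set `W` is invariant under every automorphism of `T`. -/
def AutInvariant {β : Type*} (T : Finset (Finset β)) (W : Finset β) : Prop :=
  ∀ g : Equiv.Perm β, IsAut T g → W.image g = W

/-- For the copy of `S` inside `T` given by `φ`, restriction gives a group isomorphism
from `Aut T` onto `Aut S`: every automorphism of `T` induces (via `φ`) an automorphism
of `S`, and every automorphism of `S` is induced by exactly one automorphism of `T`. -/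
def AutRestrictIso {α β : Type*} (T : Finset (Finset β)) (S : Finset (Finset α))
    (φ : α → β) : Prop :=
  (∀ g : Equiv.Perm β, IsAut T g →
      ∃ h : Equiv.Perm α, IsAut S h ∧ ∀ x : α, g (φ x) = φ (h x)) ∧
    ∀ h : Equiv.Perm α, IsAut S h →
      ∃! g : Equiv.Perm β, IsAut T g ∧ ∀ x : α, g (φ x) = φ (h x)

/-- `φ` embeds `S` as an `Aut T`-invariant subsystem of `T` on which `Aut T` induces
the full automorphism group of `S`, with `Aut T ≅ Aut S` via restriction. -/
def FullEmbedding {α β : Type*} [Fintype α] (S : Finset (Finset α)) (T : Finset (Finset β))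
    (φ : α → β) : Prop :=
  IsCopy S T φ ∧ AutInvariant T (Finset.univ.image φ) ∧ AutRestrictIso T S φ

/-- The points of the projective space `PG(n,2)`: nonzero vectors of `GF(2)^{n+1}`. -/
abbrev PGPoint (n : ℕ) := {x : Fin (n + 1) → ZMod 2 // x ≠ 0}

/-- The lines of `PG(n,2)`: 3-sets of nonzero vectors summing to `0`. -/
def PGTriples (n : ℕ) : Finset (Finset (PGPoint n)) :=
  Finset.univ.filter fun t : Finset (PGPoint n) =>
    t.card = 3 ∧ ∑ v ∈ t, (v : Fin (n + 1) → ZMod 2) = 0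

/-- The smallest subsystem of `T` containing the point set `P`. -/
def GeneratedSub {α : Type*} [Fintype α] (T : Finset (Finset α)) (P : Finset α) : Finset α :=
  Finset.univ.filter fun x => ∀ W : Finset α, IsSub T W → P ⊆ W → x ∈ W

/-- `W` is a subsystem of `T` isomorphic to `PG(n,2)`. -/
def IsPGSub {α : Type*} [Fintype α] (n : ℕ) (T : Finset (Finset α)) (W : Finset α) : Prop :=
  ∃ φ : PGPoint n → α, IsCopy (PGTriples n) T φ ∧ Finset.univ.image φ = W

/-- A triple system is `PG(2,2)`-paired if any two distinct points lie in at least two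
subsystems isomorphic to `PG(2,2)`. -/
def PG22Paired {α : Type*} [Fintype α] (T : Finset (Finset α)) : Prop :=
  ∀ p q : α, p ≠ q → ∃ W₁ W₂ : Finset α, W₁ ≠ W₂ ∧
    (p ∈ W₁ ∧ q ∈ W₁ ∧ IsPGSub 2 T W₁) ∧ p ∈ W₂ ∧ q ∈ W₂ ∧ IsPGSub 2 T W₂

/-- `T` is `PG(3,2)`-2-pointed with respect to the points `p, q`: any four points
including `p` and `q` generate a subsystem isomorphic to `PG(2,2)` or `PG(3,2)`. -/
def PG32TwoPointed {α : Type*} [Fintype α] (T : Finset (Finset α)) (p q : α) : Prop :=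
  p ≠ q ∧ ∀ s : Finset α, s.card = 4 → p ∈ s → q ∈ s →
    IsPGSub 2 T (GeneratedSub T s) ∨ IsPGSub 3 T (GeneratedSub T s)

/-- The copy of `Y` inside `2Y+1`. -/
def dp0 {γ : Type*} (a : γ) : γ ⊕ γ ⊕ Unit := Sum.inl a

/-- The disjoint copy `Y₁` of `Y` inside `2Y+1`. -/
def dp1 {γ : Type*} (a : γ) : γ ⊕ γ ⊕ Unit := Sum.inr (Sum.inl a)

/-- The extra point `*` of `2Y+1`. -/
def dpStar {γ : Type*} : γ ⊕ γ ⊕ Unit := Sum.inr (Sum.inr ())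

/-- The triples of the Steiner triple system `2Y+1` built from a system `Y` with
triple set `T`. -/
def DoubleTriples {γ : Type*} [Fintype γ] (T : Finset (Finset γ)) :
    Finset (Finset (γ ⊕ γ ⊕ Unit)) :=
  Finset.univ.filter fun t : Finset (γ ⊕ γ ⊕ Unit) =>
    (∃ s ∈ T, t = s.image dp0) ∨
    (∃ a : γ, t = {dpStar, dp0 a, dp1 a}) ∨
    (∃ a b c : γ, ({a, b, c} : Finset γ) ∈ T ∧ t = {dp1 a, dp1 b, dp0 c})

/-- The triples of the direct product of two triple systems. -/
def ProdTriples {α β : Type*} [Fintype α] [Fintype β]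
    (TA : Finset (Finset α)) (TB : Finset (Finset β)) : Finset (Finset (α × β)) :=
  Finset.univ.filter fun t : Finset (α × β) =>
    (∃ a : α, ∃ s ∈ TB, t = s.image fun b => (a, b)) ∨
    (∃ b : β, ∃ s ∈ TA, t = s.image fun a => (a, b)) ∨
    (∃ a₁ a₂ a₃ : α, ∃ b₁ b₂ b₃ : β, ({a₁, a₂, a₃} : Finset α) ∈ TA ∧
      ({b₁, b₂, b₃} : Finset β) ∈ TB ∧ t = {(a₁, b₁), (a₂, b₂), (a₃, b₃)})

/-- The triples of Moore's construction `U = X ∪ (V × A)`.  Here `TX` (on `δ`), `TV`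
(on `α`), `TY` (on `γ`) are the triple sets of `X`, `V`, `Y`; `j : δ → γ` embeds `X`
as a subsystem of `Y` and `ℓ : A → γ` labels `Y − X` by the group `A`. -/
def MooreTriples {δ α γ A : Type*} [Fintype δ] [Fintype α] [Fintype A] [Group A]
    (TX : Finset (Finset δ)) (TV : Finset (Finset α)) (TY : Finset (Finset γ))
    (j : δ → γ) (ℓ : A → γ) : Finset (Finset (δ ⊕ α × A)) :=
  Finset.univ.filter fun t : Finset (δ ⊕ α × A) =>
    (∃ s ∈ TX, t = s.image Sum.inl) ∨
    (∃ v : α, ∃ a₁ a₂ : A, ∃ x : δ, ({ℓ a₁, ℓ a₂, j x} : Finset γ) ∈ TY ∧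
      t = {Sum.inr (v, a₁), Sum.inr (v, a₂), Sum.inl x}) ∨
    (∃ v : α, ∃ a₁ a₂ a₃ : A, ({ℓ a₁, ℓ a₂, ℓ a₃} : Finset γ) ∈ TY ∧
      t = {Sum.inr (v, a₁), Sum.inr (v, a₂), Sum.inr (v, a₃)}) ∨
    (∃ v₁ v₂ v₃ : α, ∃ a₁ a₂ a₃ : A, ({v₁, v₂, v₃} : Finset α) ∈ TV ∧ a₁ * a₂ * a₃ = 1 ∧
      t = {Sum.inr (v₁, a₁), Sum.inr (v₂, a₂), Sum.inr (v₃, a₃)})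

/-- The hypotheses of Moore's construction: `Y` and `V` are Steiner triple systems,
`A` is a cyclic group, `j` embeds `X` as a subsystem of `Y` (with triple set `TX`),
and `ℓ` is a bijective labeling of `Y − X` by `A`. -/
def MooreSetup {δ α γ A : Type*} [Fintype δ] [Group A]
    (TX : Finset (Finset δ)) (TV : Finset (Finset α)) (TY : Finset (Finset γ))
    (j : δ → γ) (ℓ : A → γ) : Prop :=
  IsSTS TY ∧ IsSTS TV ∧ IsCyclic A ∧ Function.Injective j ∧
    IsSub TY (Finset.univ.image j) ∧ IsCopy TX TY j ∧
    Function.Injective ℓ ∧ Set.range ℓ = (Set.range j)ᶜ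

/-- The subsystem `Y_v = X ∪ (v × A)` of Moore's construction. -/
def MooreY {δ α A : Type*} [Fintype δ] [Fintype A] (v : α) : Finset (δ ⊕ α × A) :=
  (Finset.univ.image (Sum.inl : δ → δ ⊕ α × A)) ∪
    Finset.univ.image fun a : A => (Sum.inr (v, a) : δ ⊕ α × A)

/-- A subsystem of type (3.1) of Moore's construction, where `ε` denotes the unique
involution `−1` of `A`: the seven points `x, (v_i, a_i), (v_i, −a_i)` for a triple
`{v₁,v₂,v₃}` of `V`, with `a₁a₂a₃ = 1` and `{a_i, −a_i, x}` a triple of `Y`. -/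
def MooreType31 {δ α γ A : Type*} [Group A] (TV : Finset (Finset α))
    (TY : Finset (Finset γ)) (j : δ → γ) (ℓ : A → γ) (ε : A)
    (W : Finset (δ ⊕ α × A)) : Prop :=
  ∃ v₁ v₂ v₃ : α, ∃ a₁ a₂ a₃ : A, ∃ x : δ,
    ({v₁, v₂, v₃} : Finset α) ∈ TV ∧ a₁ * a₂ * a₃ = 1 ∧
    ({ℓ a₁, ℓ (ε * a₁), j x} : Finset γ) ∈ TY ∧
    ({ℓ a₂, ℓ (ε * a₂), j x} : Finset γ) ∈ TY ∧
    ({ℓ a₃, ℓ (ε * a₃), j x} : Finset γ) ∈ TY ∧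
    W = {Sum.inl x, Sum.inr (v₁, a₁), Sum.inr (v₁, ε * a₁), Sum.inr (v₂, a₂),
         Sum.inr (v₂, ε * a₂), Sum.inr (v₃, a₃), Sum.inr (v₃, ε * a₃)}

/-- The point set of a family of triples. -/
def ptsOf {β : Type*} (T : Finset (Finset β)) : Finset β := T.sup id

/-- Adjacency of triples: two distinct triples of `T` meeting in a point. -/
def TriAdj {β : Type*} (T : Finset (Finset β)) (t s : Finset β) : Prop :=
  t ∈ T ∧ s ∈ T ∧ t ≠ s ∧ (t ∩ s).Nonempty

/-- A partial Steiner triple system is cyclic if the graph whose vertices are its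
triples, two joined when they meet, is a cycle (equivalently: it has at least three
triples, every triple meets exactly two others, and the graph is connected). -/
def IsCyclicPSTS {β : Type*} (T : Finset (Finset β)) : Prop :=
  3 ≤ T.card ∧ (∀ t ∈ T, (T.filter fun s => s ≠ t ∧ (s ∩ t).Nonempty).card = 2) ∧
    ∀ t ∈ T, ∀ s ∈ T, Relation.ReflTransGen (TriAdj T) t s

/-- The partial Steiner triple system `Q(z)` (for the parameter `n`), with triple set
`T`, point set `P` and distinguished point `z`: two cyclic PSTSs `C₁, C₂` on
`2n+4` and `2n+6` points meeting exactly in the point `z`, which lies in two triples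
of each, triples `{z, z'_i, z_i}` of `C_i` with `z'_i` in two triples of `C_i`, and a
new point `z'` in the single additional triple `{z'_1, z', z'_2}`. -/
def IsQ {β : Type*} (n : ℕ) (T : Finset (Finset β)) (P : Finset β) (z : β) : Prop :=
  ∃ C₁ C₂ : Finset (Finset β), ∃ z' z₁' z₂' z₁ z₂ : β,
    IsPSTS T ∧ IsCyclicPSTS C₁ ∧ IsCyclicPSTS C₂ ∧
    (ptsOf C₁).card = 2 * n + 4 ∧ (ptsOf C₂).card = 2 * n + 6 ∧
    ptsOf C₁ ∩ ptsOf C₂ = {z} ∧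
    (C₁.filter fun t => z ∈ t).card = 2 ∧ (C₂.filter fun t => z ∈ t).card = 2 ∧
    ({z, z₁', z₁} : Finset β) ∈ C₁ ∧ (C₁.filter fun t => z₁' ∈ t).card = 2 ∧
    ({z, z₂', z₂} : Finset β) ∈ C₂ ∧ (C₂.filter fun t => z₂' ∈ t).card = 2 ∧
    z' ∉ ptsOf C₁ ∪ ptsOf C₂ ∧
    T = C₁ ∪ C₂ ∪ {({z₁', z', z₂'} : Finset β)} ∧
    P = ptsOf C₁ ∪ ptsOf C₂ ∪ {z'}

/-- Nonempty subsets of `β`: the points of the projective space `P` over `GF(2)`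
built on a point set `β`. -/
abbrev NESet (β : Type*) := {s : Finset β // s.Nonempty}

/-- The triples of the projective space over `GF(2)` on the nonempty subsets of `β`:
3-sets of subsets with empty symmetric difference. -/
def sdTriples (β : Type*) [Fintype β] : Finset (Finset (NESet β)) :=
  Finset.univ.filter fun t : Finset (NESet β) =>
    ∃ a b c : NESet β, a ≠ b ∧ a ≠ c ∧ b ≠ c ∧ t = {a, b, c} ∧
      symmDiff (symmDiff a.1 b.1) c.1 = ∅

/-- The singleton `{a}` as a point of the projective space. -/
def sEl {β : Type*} (a : β) : NESet β := ⟨{a}, Finset.singleton_nonempty a⟩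

/-- The pair `{a,b}` as a point of the projective space. -/
def pEl {β : Type*} (a b : β) : NESet β := ⟨{a, b}, Finset.insert_nonempty a {b}⟩

/-- The triples of `P` removed in Cameron's construction, for each triple `{a,b,c}`
of `V'`. -/
def removedTriples {β : Type*} [Fintype β] (TV' : Finset (Finset β)) :
    Finset (Finset (NESet β)) :=
  Finset.univ.filter fun t : Finset (NESet β) =>
    ∃ a b c : β, ({a, b, c} : Finset β) ∈ TV' ∧
      (t = {pEl a b, pEl a c, pEl b c} ∨ t = {sEl a, sEl b, pEl a b} ∨
       t = {sEl a, sEl c, pEl a c} ∨ t = {sEl b, sEl c, pEl b c})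

/-- The new triples of Cameron's construction, for each triple `{a,b,c}` of `V'`. -/
def addedTriples {β : Type*} [Fintype β] (TV' : Finset (Finset β)) :
    Finset (Finset (NESet β)) :=
  Finset.univ.filter fun t : Finset (NESet β) =>
    ∃ a b c : β, ({a, b, c} : Finset β) ∈ TV' ∧
      (t = {sEl a, sEl b, sEl c} ∨ t = {sEl a, pEl a b, pEl a c} ∨
       t = {sEl b, pEl a b, pEl b c} ∨ t = {sEl c, pEl a c, pEl b c})

/-- The Steiner triple system `U` of Cameron's construction obtained from the
projective space `P` and the partial system `V'`. -/
def CameronSTS {β : Type*} [Fintype β] (TV' : Finset (Finset β)) :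
    Finset (Finset (NESet β)) :=
  (sdTriples β \ removedTriples TV') ∪ addedTriples TV'

/-!
Moore's construction glues Steiner triple systems along a common subsystem: given systems on `X` and
`V` and an abelian group `A`, the points are those of `X ⊕ V × A`, every fibre `X ⊕ {v} × A` carries
a system containing the one on `X`, and the remaining triples are `(v₁, a₁), (v₂, a₂), (v₃, a₃)`
with `v₁, v₂, v₃` a triple of `V` and `a₁ + a₂ + a₃ = 0`. Here the system on the fibre of `v` is
chosen according to a colour of `v`. If these systems have no subsystem with large stabilizer in
`A`, then the fibres are the only subsystems of their size. Automorphisms therefore permute the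
fibres, and they are affine on each of them. If moreover the systems for different colours are rigid
and not affinely isomorphic, the automorphism group is that of the coloured system on `V`.

For `V` we take the projective space over `ZMod 2` with coordinates indexed by a `G`-set `β` with
two regular orbits, coloured by its `G`-orbits. An automorphism preserving the colours is linear and
agrees with an element of `G` on each vector separately; the vectors `e_x + e_b`, with `x` in a
regular orbit not containing `b`, show that the element is the same for all of them. The parity of
the number of further points of `β` decides the residue class of the order.

The rigid systems live on `A = ZMod 2 × ZMod c` with `c` odd. The triangles come from triples of
differences, two mixed and one pure, so they are translation invariant. The remaining edges have to
be split into perfect matchings, one for each point of `X`. Each remaining pure difference is joined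
with a mixed one to form copies of prisms over cycles, which are 3-edge-coloured; the other mixed
differences are perfect matchings already. The number of triangles is a free parameter, and
nonisomorphic systems arise by varying the mixed difference joined to the pure difference `1`.
-/

/-! ### Steiner quasigroups -/

/-- A Steiner quasigroup: an idempotent totally symmetric quasigroup. Sending two distinct points to
the third point of their triple identifies Steiner triple systems with these. -/
structure SteinerQuasigroup (α : Type*) where
  /-- The third point on the triple through two points. -/
  op : α → α → α
  op_self : ∀ p, op p p = p
  op_comm : ∀ p q, op p q = op q p
  op_op : ∀ p q, op p (op p q) = q

namespace SteinerQuasigroup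

variable {α β κ : Type*} (S : SteinerQuasigroup α)

lemma op_op_right (p q : α) : S.op q (S.op p q) = p := by
  rw [S.op_comm p q, S.op_op]

lemma op_op_op_left (p q : α) : S.op (S.op p q) p = q := by
  rw [S.op_comm, S.op_op]

lemma op_op_op_right (p q : α) : S.op (S.op p q) q = p := by
  rw [S.op_comm, S.op_op_right]

lemma op_ne_left {p q : α} (h : p ≠ q) : S.op p q ≠ p := fun h' =>
  h (by simpa only [h', S.op_self] using S.op_op p q)

lemma op_ne_right {p q : α} (h : p ≠ q) : S.op p q ≠ q := by
  rw [S.op_comm]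
  exact S.op_ne_left h.symm

/-- The automorphism group of a Steiner quasigroup, as a subgroup of the permutation group. -/
def autSubgroup : Subgroup (Equiv.Perm α) where
  carrier := {g | ∀ p q, g (S.op p q) = S.op (g p) (g q)}
  one_mem' _ _ := rfl
  mul_mem' {a b} ha hb p q := by rw [Equiv.Perm.mul_apply, hb, ha]; rfl
  inv_mem' {a} ha p q := by
    apply a.injective
    rw [ha]
    simp

/-- The automorphisms of a Steiner quasigroup preserving a colouring of its points. -/
def colourAut (col : α → κ) : Subgroup (Equiv.Perm α) where
  carrier := {g | g ∈ S.autSubgroup ∧ ∀ p, col (g p) = col p}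
  one_mem' := ⟨one_mem _, fun _ => rfl⟩
  mul_mem' {a b} ha hb := ⟨mul_mem ha.1 hb.1, fun p => (ha.2 (b p)).trans (hb.2 p)⟩
  inv_mem' {a} ha := ⟨inv_mem ha.1, fun p => by rw [← ha.2]; simp⟩

/-- A set of points closed under the operation; these are the subsystems of the triple system. -/
def IsSubsystem (W : Finset α) : Prop :=
  ∀ p ∈ W, ∀ q ∈ W, S.op p q ∈ W

variable {S} in
lemma IsSubsystem.image [DecidableEq α] {W : Finset α} (hW : S.IsSubsystem W) {g : Equiv.Perm α}
    (hg : g ∈ S.autSubgroup) : S.IsSubsystem (W.image g) := by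
  simp only [IsSubsystem, forall_mem_image]
  intro p hp q hq
  rw [← hg]
  exact mem_image_of_mem _ (hW p hp q hq)

/-- The triples of the Steiner triple system given by a Steiner quasigroup. -/
def triples [Fintype α] : Finset (Finset α) :=
  univ.filter fun t => ∃ p q, p ≠ q ∧ t = {p, q, S.op p q}

lemma mem_triples [Fintype α] {t : Finset α} :
    t ∈ S.triples ↔ ∃ p q, p ≠ q ∧ t = {p, q, S.op p q} := by
  simp only [triples, mem_filter, mem_univ, true_and]

lemma eq_of_mem_triples [Fintype α] {t : Finset α} (ht : t ∈ S.triples) {p q : α} (hp : p ∈ t)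
    (hq : q ∈ t) (hpq : p ≠ q) : t = {p, q, S.op p q} := by
  obtain ⟨a, b, -, rfl⟩ := S.mem_triples.1 ht
  simp only [mem_insert, mem_singleton] at hp hq
  ext r
  rcases hp with hp | hp | hp <;> rcases hq with hq | hq | hq <;>
    simp only [hp, hq, ne_eq, not_true_eq_false, S.op_comm b a, op_op, op_op_right, op_op_op_left,
      op_op_op_right, mem_insert, mem_singleton] at hpq ⊢ <;> tauto

theorem isSTS_triples [Fintype α] : IsSTS S.triples := by
  refine ⟨fun t ht => ?_, fun p q hpq => ?_⟩
  · obtain ⟨p, q, hpq, rfl⟩ := S.mem_triples.1 ht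
    exact card_eq_three.2 ⟨p, q, _, hpq, (S.op_ne_left hpq).symm, (S.op_ne_right hpq).symm, rfl⟩
  · exact ⟨{p, q, S.op p q}, ⟨S.mem_triples.2 ⟨p, q, hpq, rfl⟩, by simp, by simp⟩,
      fun t ht => S.eq_of_mem_triples ht.1 ht.2.1 ht.2.2 hpq⟩

lemma image_mem_triples [Fintype α] {g : Equiv.Perm α} (hg : g ∈ S.autSubgroup) {t : Finset α}
    (ht : t ∈ S.triples) : t.image g ∈ S.triples := by
  obtain ⟨p, q, hpq, rfl⟩ := S.mem_triples.1 ht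
  exact S.mem_triples.2 ⟨g p, g q, g.injective.ne hpq, by simp [image_insert, hg p q]⟩

theorem autGroup_triples [Fintype α] : autGroup S.triples = S.autSubgroup := by
  ext g
  refine ⟨fun (h : IsAut S.triples g) p q => ?_,
    fun hg t => ⟨S.image_mem_triples hg, fun ht => ?_⟩⟩
  · by_cases hpq : p = q
    · simp only [hpq, S.op_self]
    have ht := (h {p, q, S.op p q}).1 (S.mem_triples.2 ⟨p, q, hpq, rfl⟩)
    have he := S.eq_of_mem_triples ht (mem_image_of_mem g (by simp)) (mem_image_of_mem g (by simp))
      (g.injective.ne hpq)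
    have hr : g (S.op p q) ∈ ({g p, g q, S.op (g p) (g q)} : Finset α) :=
      he ▸ mem_image_of_mem g (by simp)
    simpa [S.op_ne_left hpq, S.op_ne_right hpq] using hr
  · have := S.image_mem_triples (inv_mem hg) ht
    rw [image_image] at this
    simpa [Function.comp_def] using this

/-- Transport of a Steiner quasigroup along a bijection. -/
def map (e : α ≃ β) : SteinerQuasigroup β where
  op p q := e (S.op (e.symm p) (e.symm q))
  op_self p := by rw [S.op_self, e.apply_symm_apply]
  op_comm p q := by rw [S.op_comm]
  op_op p q := by rw [e.symm_apply_apply, S.op_op, e.apply_symm_apply]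

/-- The isomorphism of automorphism groups induced by transport along a bijection. -/
def autSubgroupMap (e : α ≃ β) : S.autSubgroup ≃* (S.map e).autSubgroup where
  toFun g := ⟨e.permCongr g.1, fun p q => by simp [map, g.2 (e.symm p) (e.symm q)]⟩
  invFun g := ⟨e.symm.permCongr g.1, fun p q => by
    have := g.2 (e p) (e q)
    simp only [map, Equiv.symm_apply_apply] at this
    simp [this]⟩
  left_inv g := by ext; simp
  right_inv g := by ext; simp
  map_mul' g h := by ext; simp

theorem exists_isSTS_fin [Fintype α] {u : ℕ} (hu : Fintype.card α = u) :
    ∃ T : Finset (Finset (Fin u)), IsSTS T ∧ Nonempty (S.autSubgroup ≃* autGroup T) := by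
  let e : α ≃ Fin u := Fintype.equivFinOfCardEq hu
  refine ⟨(S.map e).triples, (S.map e).isSTS_triples, ?_⟩
  rw [autGroup_triples]
  exact ⟨S.autSubgroupMap e⟩

end SteinerQuasigroup

lemma isUnit_two_zmod {c : ℕ} (hc : Odd c) : IsUnit (2 : ZMod c) := by
  exact_mod_cast (ZMod.isUnit_iff_coprime 2 c).2 (Nat.coprime_two_left.2 hc)

section Bose

variable {R : Type*} [CommRing R] [Invertible (2 : R)]

/-- The operation of Bose's Steiner triple system on `R × ZMod 3`: the triples are
`{(i, 0), (i, 1), (i, 2)}` and `{(i, a), (j, a), ((i + j) / 2, a + 1)}`. -/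
def boseOp (p q : R × ZMod 3) : R × ZMod 3 :=
  if p.2 = q.2 then if p.1 = q.1 then p else (⅟2 * (p.1 + q.1), p.2 + 1)
  else if p.1 = q.1 then (p.1, -(p.2 + q.2))
  else if q.2 = p.2 + 1 then (2 * q.1 - p.1, p.2) else (2 * p.1 - q.1, q.2)

lemma eq_or_eq_add_one_or_zmod_three (a b : ZMod 3) : b = a ∨ b = a + 1 ∨ a = b + 1 := by
  decide +revert

lemma boseOp_self (p : R × ZMod 3) : boseOp p p = p := by
  simp only [boseOp, if_true]

lemma boseOp_of_fst_eq {i : R} {a b : ZMod 3} (h : a ≠ b) :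
    boseOp (i, a) (i, b) = (i, -(a + b)) := by
  simp only [boseOp, h, if_false, if_true]

lemma boseOp_of_snd_eq {i j : R} (h : i ≠ j) (a : ZMod 3) :
    boseOp (i, a) (j, a) = (⅟2 * (i + j), a + 1) := by
  simp only [boseOp, h, if_false, if_true]

lemma boseOp_add_one {i j : R} (h : i ≠ j) (a : ZMod 3) :
    boseOp (i, a) (j, a + 1) = (2 * j - i, a) := by
  have : a ≠ a + 1 := by decide +revert
  simp only [boseOp, h, this, if_false, if_true]

lemma boseOp_add_one_left {i j : R} (h : i ≠ j) (a : ZMod 3) :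
    boseOp (i, a + 1) (j, a) = (2 * i - j, a) := by
  have h₁ : a + 1 ≠ a := by decide +revert
  have h₂ : a ≠ a + 1 + 1 := by decide +revert
  simp only [boseOp, h, h₁, h₂, if_false]

lemma boseOp_comm (p q : R × ZMod 3) : boseOp p q = boseOp q p := by
  obtain ⟨i, a⟩ := p
  obtain ⟨j, b⟩ := q
  by_cases hij : i = j
  · subst hij
    by_cases hab : a = b
    · rw [hab]
    · rw [boseOp_of_fst_eq hab, boseOp_of_fst_eq (Ne.symm hab), add_comm]
  · obtain rfl | rfl | rfl := eq_or_eq_add_one_or_zmod_three a b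
    · rw [boseOp_of_snd_eq hij, boseOp_of_snd_eq (Ne.symm hij), add_comm]
    · rw [boseOp_add_one hij, boseOp_add_one_left (Ne.symm hij)]
    · rw [boseOp_add_one_left hij, boseOp_add_one (Ne.symm hij)]

lemma boseOp_boseOp (p q : R × ZMod 3) : boseOp p (boseOp p q) = q := by
  obtain ⟨i, a⟩ := p
  obtain ⟨j, b⟩ := q
  have two_mul_half (x : R) : 2 * (⅟2 * x) = x := mul_invOf_cancel_left' 2 x
  have half_mul_two (x : R) : ⅟2 * (2 * x) = x := invOf_mul_cancel_left' 2 x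
  by_cases hij : i = j
  · subst hij
    by_cases hab : a = b
    · rw [hab, boseOp_self, boseOp_self]
    · have ha : a ≠ -(a + b) := by decide +revert
      have hb : -(a + -(a + b)) = b := by decide +revert
      rw [boseOp_of_fst_eq hab, boseOp_of_fst_eq ha, hb]
  · obtain rfl | rfl | rfl := eq_or_eq_add_one_or_zmod_three a b
    · have h : i ≠ ⅟2 * (i + j) := fun h => hij <| by
        linear_combination 2 * h + two_mul_half (i + j)
      rw [boseOp_of_snd_eq hij, boseOp_add_one h, two_mul_half, add_sub_cancel_left]
    · have h : i ≠ 2 * j - i := fun h => hij <| by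
        rw [← half_mul_two i, ← half_mul_two j]
        linear_combination ⅟2 * h
      rw [boseOp_add_one hij, boseOp_of_snd_eq h, add_sub_cancel, half_mul_two]
    · have h : i ≠ 2 * i - j := fun h => hij (by linear_combination -h)
      rw [boseOp_add_one_left hij, boseOp_add_one_left h, sub_sub_cancel]

/-- Bose's Steiner triple system. -/
def boseQuasigroup (R : Type*) [CommRing R] [Invertible (2 : R)] :
    SteinerQuasigroup (R × ZMod 3) where
  op := boseOp
  op_self := boseOp_self
  op_comm := boseOp_comm
  op_op := boseOp_boseOp

end Bose

theorem nonempty_steinerQuasigroup {X : Type*} [Fintype X] {k : ℕ}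
    (hX : Fintype.card X = 6 * k + 3) : Nonempty (SteinerQuasigroup X) := by
  let _ : Invertible (2 : ZMod (2 * k + 1)) := (isUnit_two_zmod (odd_two_mul_add_one k)).invertible
  refine ⟨(boseQuasigroup (ZMod (2 * k + 1))).map (Fintype.equivOfCardEq ?_)⟩
  rw [hX, Fintype.card_prod, ZMod.card, ZMod.card]
  ring

/-! ### Moore's construction -/

/-- A map between additive groups which is a homomorphism up to translation. -/
def IsAffine {A B : Type*} [AddCommGroup A] [AddCommGroup B] (f : A → B) : Prop :=
  ∀ a b, f (a + b) + f 0 = f a + f b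

/-- A Steiner triple system on `X ⊕ A` containing `X` as a subsystem, without the triples in `X`. -/
structure HoledSystem (X A : Type*) where
  /-- The third point of the triple through two points of `A`. -/
  third : A → A → X ⊕ A
  /-- The third point of the triple through a point of `X` and a point of `A`. -/
  partner : X → A → A
  third_self : ∀ a, third a a = .inr a
  third_comm : ∀ a b, third a b = third b a
  third_eq_inr : ∀ {a b c}, third a b = .inr c → third a c = .inr b
  third_partner : ∀ x a, third a (partner x a) = .inl x
  partner_eq : ∀ {x a b}, third a b = .inl x → partner x a = b

namespace HoledSystem

variable {X A κ : Type*}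

lemma partner_partner (H : HoledSystem X A) (x : X) (a : A) :
    H.partner x (H.partner x a) = a :=
  H.partner_eq ((H.third_comm _ _).trans (H.third_partner x a))

variable [AddCommGroup A]

open scoped Pointwise in
/-- The only nonempty subset of the finite group `A` which is closed under the holed system and
whose stabilizer under translation has index at most `n` is `A` itself. -/
def IsGenerating (H : HoledSystem X A) (n : ℕ) : Prop :=
  ∀ S : Set A, S.Nonempty → (∀ a ∈ S, ∀ b ∈ S, ∀ c, H.third a b = .inr c → c ∈ S) →
    (AddAction.stabilizer A S).index ≤ n → S = Set.univ

/-- The only isomorphisms between members of the family which are affine on `A` are the identity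
maps. -/
def IsRigidFamily (H : κ → HoledSystem X A) : Prop :=
  ∀ k l (f : Equiv.Perm A) (ρ : X → X), ρ.Injective → IsAffine f →
    (∀ a b, (H l).third (f a) (f b) = ((H k).third a b).map ρ f) → k = l ∧ f = 1

end HoledSystem

section MooreFibre

variable {X V A : Type*} [Fintype A]

/-- The subsystem `X ∪ ({v} × A)` of Moore's construction. -/
def mooreFibre (X A : Type*) [Fintype X] [Fintype A] (v : V) : Finset (X ⊕ V × A) :=
  univ.disjSum ({v} ×ˢ univ)

@[simp] lemma inl_mem_mooreFibre [Fintype X] (v : V) (x : X) : .inl x ∈ mooreFibre X A v := by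
  simp [mooreFibre]

@[simp] lemma inr_mem_mooreFibre [Fintype X] {v w : V} {a : A} :
    .inr (w, a) ∈ mooreFibre X A v ↔ w = v := by
  simp [mooreFibre, eq_comm]

lemma card_mooreFibre [Fintype X] (v : V) :
    #(mooreFibre X A v) = Fintype.card X + Fintype.card A := by
  simp [mooreFibre]

lemma mooreFibre_injective [Fintype X] [Nonempty A] :
    (mooreFibre X A : V → Finset (X ⊕ V × A)).Injective := fun v w h => by
  have hmem : .inr (v, Classical.arbitrary A) ∈ mooreFibre X A w := by simp [← h]
  exact inr_mem_mooreFibre.1 hmem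

/-- The points of `S` in the fibre over `v`. -/
def fibre (S : Finset (X ⊕ V × A)) (v : V) : Finset A :=
  univ.filter fun a => .inr (v, a) ∈ S

@[simp] lemma mem_fibre {S : Finset (X ⊕ V × A)} {v : V} {a : A} :
    a ∈ fibre S v ↔ .inr (v, a) ∈ S := by
  simp [fibre]

lemma card_eq_sum_card_fibre [Fintype V] (S : Finset (X ⊕ V × A)) :
    #S = #S.toLeft + ∑ v, #(fibre S v) := by
  have hright : S.toRight = (univ.sigma (fibre S)).map (Equiv.sigmaEquivProd V A).toEmbedding := by
    ext ⟨v, a⟩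
    simp
  rw [← card_toLeft_add_card_toRight, hright, card_map, card_sigma]

lemma exists_card_le_mul_card_fibre [Fintype X] [Fintype V] [Nonempty V]
    {S : Finset (X ⊕ V × A)} (hS : Fintype.card X + Fintype.card A ≤ #S) :
    ∃ v, Fintype.card A ≤ Fintype.card V * #(fibre S v) := by
  have hsum : Fintype.card A ≤ ∑ v, #(fibre S v) := by
    have := card_eq_sum_card_fibre S
    have : #S.toLeft ≤ Fintype.card X := card_le_univ _
    omega
  obtain ⟨v, -, hv⟩ := exists_le_of_sum_le (s := (univ : Finset V)) univ_nonempty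
    (f := fun _ => Fintype.card A) (g := fun v => Fintype.card V * #(fibre S v)) (by
      rw [sum_const, smul_eq_mul, ← mul_sum, card_univ]
      exact Nat.mul_le_mul_left _ hsum)
  exact ⟨v, hv⟩

lemma exists_fibrewise_of_image_mooreFibre [Fintype X] [Nontrivial V] {Φ : Equiv.Perm (X ⊕ V × A)}
    {g : V → V} (hginj : g.Injective)
    (hg : ∀ v, (mooreFibre X A v).image Φ = mooreFibre X A (g v)) :
    ∃ (ρ : X → X) (f : V → A → A), (∀ x, Φ (.inl x) = .inl (ρ x)) ∧
      ∀ v a, Φ (.inr (v, a)) = .inr (g v, f v a) := by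
  have hmem (v : V) (p : X ⊕ V × A) : Φ p ∈ mooreFibre X A (g v) ↔ p ∈ mooreFibre X A v := by
    rw [← hg, Φ.injective.mem_finset_image]
  have hinl (x : X) : ∃ y, Φ (.inl x) = .inl y := by
    obtain ⟨v, w, hvw⟩ := exists_pair_ne V
    rcases hp : Φ (.inl x) with y | ⟨u, a⟩
    · exact ⟨y, rfl⟩
    · have hv := (hmem v (.inl x)).2 (by simp)
      have hw := (hmem w (.inl x)).2 (by simp)
      rw [hp, inr_mem_mooreFibre] at hv hw
      exact absurd (hginj (hv.symm.trans hw)) hvw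
  have hinr (v : V) (a : A) : ∃ b, Φ (.inr (v, a)) = .inr (g v, b) := by
    rcases hp : Φ (.inr (v, a)) with y | ⟨u, b⟩
    · obtain ⟨w, hw⟩ := exists_ne v
      have hw' := (hmem w (.inr (v, a))).1 (by simp [hp])
      exact absurd (inr_mem_mooreFibre.1 hw').symm hw
    · have hv := (hmem v (.inr (v, a))).2 (by simp)
      rw [hp, inr_mem_mooreFibre] at hv
      exact ⟨b, by rw [hv]⟩
  choose ρ hρ using hinl
  choose f hf using hinr
  exact ⟨ρ, f, hρ, hf⟩

end MooreFibre

section Moore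

variable {X V A κ : Type*} [AddCommGroup A]

/-- Moore's construction on `X ∪ (V × A)`: each `X ∪ ({v} × A)` carries the holed system belonging
to the colour of `v`, and points of different fibres are joined by the triples
`{(u, a), (v, b), (w, c)}` with `{u, v, w}` a triple of `V` and `a + b + c = 0`. -/
def mooreQuasigroup (SX : SteinerQuasigroup X) (SV : SteinerQuasigroup V)
    (H : κ → HoledSystem X A) (col : V → κ) : SteinerQuasigroup (X ⊕ V × A) where
  op
    | .inl x, .inl y => .inl (SX.op x y)
    | .inl x, .inr (v, a) => .inr (v, (H (col v)).partner x a)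
    | .inr (v, a), .inl x => .inr (v, (H (col v)).partner x a)
    | .inr (v, a), .inr (w, b) =>
      if v = w then ((H (col v)).third a b).map id (v, ·) else .inr (SV.op v w, -a - b)
  op_self := by
    rintro (x | ⟨v, a⟩)
    · simp [SX.op_self]
    · simp [HoledSystem.third_self]
  op_comm := by
    rintro (x | ⟨v, a⟩) (y | ⟨w, b⟩)
    · simp [SX.op_comm x y]
    · rfl
    · rfl
    · by_cases h : v = w
      · subst h
        simp [(H (col v)).third_comm a b]
      · simp [h, Ne.symm h, SV.op_comm v w, sub_eq_add_neg, add_comm]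
  op_op := by
    rintro (x | ⟨v, a⟩) (y | ⟨w, b⟩)
    · simp [SX.op_op]
    · simp [HoledSystem.partner_partner]
    · simp [HoledSystem.third_partner]
    · by_cases h : v = w
      · subst h
        rcases hc : (H (col v)).third a b with x | c
        · simp [hc, (H (col v)).partner_eq hc]
        · simp [hc, (H (col v)).third_eq_inr hc]
      · simp [h, (SV.op_ne_left h).symm, SV.op_op]

variable {SX : SteinerQuasigroup X} {SV : SteinerQuasigroup V} {H : κ → HoledSystem X A}
  {col : V → κ}

@[simp] lemma moore_inl_inl (x y : X) :
    (mooreQuasigroup SX SV H col).op (.inl x) (.inl y) = .inl (SX.op x y) := rfl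

@[simp] lemma moore_inl_inr (x : X) (v : V) (a : A) :
    (mooreQuasigroup SX SV H col).op (.inl x) (.inr (v, a)) =
      .inr (v, (H (col v)).partner x a) := rfl

@[simp] lemma moore_inr_inl (x : X) (v : V) (a : A) :
    (mooreQuasigroup SX SV H col).op (.inr (v, a)) (.inl x) =
      .inr (v, (H (col v)).partner x a) := rfl

@[simp] lemma moore_inr_inr_self (v : V) (a b : A) :
    (mooreQuasigroup SX SV H col).op (.inr (v, a)) (.inr (v, b)) =
      ((H (col v)).third a b).map id (v, ·) := if_pos rfl

lemma moore_inr_inr {v w : V} (h : v ≠ w) (a b : A) :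
    (mooreQuasigroup SX SV H col).op (.inr (v, a)) (.inr (w, b)) = .inr (SV.op v w, -a - b) :=
  if_neg h

section Subsystems

variable [Fintype A] {S : Finset (X ⊕ V × A)} {v w : V}

lemma isSubsystem_mooreFibre [Fintype X] (v : V) :
    (mooreQuasigroup SX SV H col).IsSubsystem (mooreFibre X A v) := by
  rintro (x | ⟨w, a⟩) hp (y | ⟨w', b⟩) hq
  · simp
  · simpa using hq
  · simpa using hp
  · obtain rfl := inr_mem_mooreFibre.1 hp
    obtain rfl := inr_mem_mooreFibre.1 hq
    rw [moore_inr_inr_self]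
    rcases (H (col w')).third a b with x | c <;> simp

lemma sub_add_mem_fibre (hS : (mooreQuasigroup SX SV H col).IsSubsystem S) (hvw : v ≠ w)
    {p q b : A} (hp : p ∈ fibre S v) (hq : q ∈ fibre S v) (hb : b ∈ fibre S w) :
    p - q + b ∈ fibre S w := by
  rw [mem_fibre] at hp hq hb ⊢
  have hpb := hS _ hp _ hb
  rw [moore_inr_inr hvw] at hpb
  have hqpb := hS _ hq _ hpb
  rw [moore_inr_inr (SV.op_ne_left hvw).symm, SV.op_op] at hqpb
  convert hqpb using 3
  abel

open scoped Pointwise in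
lemma index_stabilizer_fibre_le [Fintype V] (hS : (mooreQuasigroup SX SV H col).IsSubsystem S)
    (hvw : v ≠ w) (hA : Fintype.card A ≤ Fintype.card V * #(fibre S v)) :
    (AddAction.stabilizer A (fibre S w : Set A)).index ≤ Fintype.card V := by
  set K := AddAction.stabilizer A (fibre S w : Set A)
  obtain ⟨q, hq⟩ : (fibre S v).Nonempty := by
    rw [← card_pos]
    exact Nat.pos_of_mul_pos_left (Fintype.card_pos.trans_le hA)
  have hsub (p : A) (hp : p ∈ fibre S v) : p - q ∈ K := by
    refine (AddAction.mem_stabilizer_set_iff_vadd_set_subset (finite_toSet _)).2 ?_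
    rintro _ ⟨b, hb, rfl⟩
    exact sub_add_mem_fibre hS hvw hp hq hb
  have hcard : #(fibre S v) ≤ Nat.card K := by
    rw [Nat.card_eq_fintype_card, ← Fintype.card_coe]
    exact Fintype.card_le_of_injective (fun p => (⟨p - q, hsub p p.2⟩ : K)) fun p p' h =>
      Subtype.ext (sub_left_injective (congrArg Subtype.val h))
  refine Nat.le_of_mul_le_mul_left ?_ (Nat.card_pos (α := K))
  calc Nat.card K * K.index = Fintype.card A := by
        rw [K.card_mul_index, Nat.card_eq_fintype_card]
    _ ≤ Fintype.card V * #(fibre S v) := hA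
    _ ≤ Nat.card K * Fintype.card V := by
        rw [mul_comm]
        exact Nat.mul_le_mul_right _ hcard

lemma fibre_eq_univ [Fintype V] (hS : (mooreQuasigroup SX SV H col).IsSubsystem S)
    (hH : ∀ k, (H k).IsGenerating (Fintype.card V)) (hvw : v ≠ w)
    (hA : Fintype.card A ≤ Fintype.card V * #(fibre S v)) (hw : (fibre S w).Nonempty) :
    fibre S w = univ := by
  refine coe_eq_univ.1 (hH (col w) _ hw (fun a ha b hb c hc => ?_)
    (index_stabilizer_fibre_le hS hvw hA))
  simp only [mem_coe, mem_fibre] at ha hb ⊢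
  simpa only [moore_inr_inr_self, hc, Sum.map_inr] using hS _ ha _ hb

/-- `S` contains the three fibres over a triple of `V`. -/
lemma three_mul_card_le_card [Fintype V] (hS : (mooreQuasigroup SX SV H col).IsSubsystem S)
    (hH : ∀ k, (H k).IsGenerating (Fintype.card V)) (hvw : v ≠ w)
    (hA : Fintype.card A ≤ Fintype.card V * #(fibre S v)) (hw : (fibre S w).Nonempty) :
    3 * Fintype.card A ≤ #S := by
  have hwuniv := fibre_eq_univ hS hH hvw hA hw
  obtain ⟨p, hp⟩ : (fibre S v).Nonempty := by
    rw [← card_pos]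
    exact Nat.pos_of_mul_pos_left (Fintype.card_pos.trans_le hA)
  obtain ⟨b, hb⟩ := hw
  have hvuniv : fibre S v = univ := by
    refine fibre_eq_univ hS hH hvw.symm ?_ ⟨p, hp⟩
    rw [hwuniv, card_univ]
    exact Nat.le_mul_of_pos_left _ (Fintype.card_pos_iff.2 ⟨v⟩)
  have hthird : fibre S (SV.op v w) = univ := by
    refine fibre_eq_univ hS hH (SV.op_ne_left hvw).symm hA ⟨-p - b, ?_⟩
    simpa only [mem_fibre, moore_inr_inr hvw] using hS _ (mem_fibre.1 hp) _ (mem_fibre.1 hb)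
  calc 3 * Fintype.card A = ∑ u ∈ {v, w, SV.op v w}, #(fibre S u) := by
        rw [sum_insert (by simp [hvw, (SV.op_ne_left hvw).symm]),
          sum_insert (by simp [(SV.op_ne_right hvw).symm]), sum_singleton, hvuniv, hwuniv, hthird,
          card_univ]
        ring
    _ ≤ ∑ u, #(fibre S u) := sum_le_sum_of_subset (subset_univ _)
    _ ≤ #S := (Nat.le_add_left _ _).trans_eq (card_eq_sum_card_fibre S).symm

theorem exists_eq_mooreFibre [Fintype X] [Fintype V] [Nonempty V]
    (hS : (mooreQuasigroup SX SV H col).IsSubsystem S)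
    (hH : ∀ k, (H k).IsGenerating (Fintype.card V)) (hX : Fintype.card X < 2 * Fintype.card A)
    (hcard : #S = Fintype.card X + Fintype.card A) : ∃ v, S = mooreFibre X A v := by
  obtain ⟨v, hv⟩ := exists_card_le_mul_card_fibre hcard.ge
  refine ⟨v, eq_of_subset_of_card_le ?_ (by rw [card_mooreFibre, hcard])⟩
  rintro (x | ⟨w, b⟩) hp
  · exact inl_mem_mooreFibre v x
  · rw [inr_mem_mooreFibre]
    by_contra hwv
    have := three_mul_card_le_card hS hH (Ne.symm hwv) hv ⟨b, mem_fibre.2 hp⟩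
    omega

end Subsystems

section Automorphisms

variable {Φ : Equiv.Perm (X ⊕ V × A)}

theorem exists_fibrewise [Fintype X] [Fintype V] [Fintype A] [Nontrivial V]
    (hH : ∀ k, (H k).IsGenerating (Fintype.card V)) (hX : Fintype.card X < 2 * Fintype.card A)
    (hΦ : Φ ∈ (mooreQuasigroup SX SV H col).autSubgroup) :
    ∃ (ρ : X → X) (g : Equiv.Perm V) (f : V → Equiv.Perm A), ρ.Injective ∧
      (∀ x, Φ (.inl x) = .inl (ρ x)) ∧ ∀ v a, Φ (.inr (v, a)) = .inr (g v, f v a) := by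
  have himage (v : V) : ∃ w, (mooreFibre X A v).image Φ = mooreFibre X A w :=
    exists_eq_mooreFibre ((isSubsystem_mooreFibre v).image hΦ) hH hX
      (by rw [card_image_of_injective _ Φ.injective, card_mooreFibre])
  choose g hg using himage
  have hginj : g.Injective := fun v w hvw =>
    mooreFibre_injective (image_injective Φ.injective (by rw [hg, hg, hvw]))
  obtain ⟨ρ, f, hρ, hf⟩ := exists_fibrewise_of_image_mooreFibre hginj hg
  have hρinj : ρ.Injective := fun x y hxy =>
    Sum.inl_injective (Φ.injective (by rw [hρ, hρ, hxy]))
  have hfinj (v : V) : (f v).Injective := fun a b hab => by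
    have : (.inr (v, a) : X ⊕ V × A) = .inr (v, b) := Φ.injective (by rw [hf, hf, hab])
    simpa using this
  exact ⟨ρ, .ofBijective g (Finite.injective_iff_bijective.1 hginj),
    fun v => .ofBijective (f v) (Finite.injective_iff_bijective.1 (hfinj v)), hρinj, hρ, hf⟩

variable {ρ : X → X} {g : Equiv.Perm V} {f : V → Equiv.Perm A}

lemma fibrewise_op (hΦ : Φ ∈ (mooreQuasigroup SX SV H col).autSubgroup)
    (hf : ∀ v a, Φ (.inr (v, a)) = .inr (g v, f v a)) {v w : V} (hvw : v ≠ w) (a b : A) :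
    g (SV.op v w) = SV.op (g v) (g w) ∧ f (SV.op v w) (-a - b) = -f v a - f w b := by
  have h := hΦ (.inr (v, a)) (.inr (w, b))
  rw [moore_inr_inr hvw, hf, hf, hf, moore_inr_inr (g.injective.ne hvw)] at h
  simpa only [Sum.inr.injEq, Prod.mk.injEq] using h

lemma third_fibrewise (hΦ : Φ ∈ (mooreQuasigroup SX SV H col).autSubgroup)
    (hρ : ∀ x, Φ (.inl x) = .inl (ρ x)) (hf : ∀ v a, Φ (.inr (v, a)) = .inr (g v, f v a))
    (v : V) (a b : A) :
    (H (col (g v))).third (f v a) (f v b) = ((H (col v)).third a b).map ρ (f v) := by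
  have h := hΦ (.inr (v, a)) (.inr (v, b))
  rw [hf, hf, moore_inr_inr_self, moore_inr_inr_self] at h
  rcases hab : (H (col v)).third a b with x | c <;>
    rcases hfab : (H (col (g v))).third (f v a) (f v b) with y | d <;>
    simp_all

lemma isAffine_fibrewise [Nontrivial V] (hΦ : Φ ∈ (mooreQuasigroup SX SV H col).autSubgroup)
    (hf : ∀ v a, Φ (.inr (v, a)) = .inr (g v, f v a)) (v : V) : IsAffine (f v) := by
  obtain ⟨w, hwv⟩ := exists_ne v
  have key {a b a' b' : A} (h : a + b = a' + b') : f v a + f w b = f v a' + f w b' := by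
    have h₁ := (fibrewise_op hΦ hf hwv.symm a b).2
    have h₂ := (fibrewise_op hΦ hf hwv.symm a' b').2
    rw [← neg_add', h, neg_add', h₂, ← neg_add', ← neg_add'] at h₁
    exact (neg_injective h₁).symm
  intro a b
  have h₁ : f v (a + b) + f w 0 = f v a + f w b := key (add_zero _)
  have h₂ : f v b + f w 0 = f v 0 + f w b := key (add_comm _ _)
  calc f v (a + b) + f v 0 = (f v (a + b) + f w 0) + (f v 0 + f w b) - f w 0 - f w b := by abel
    _ = f v a + f v b := by rw [h₁, ← h₂]; abel

/-- The automorphism of Moore's construction induced by a colour-preserving automorphism of `V`. -/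
def mooreAut (SX : SteinerQuasigroup X) (SV : SteinerQuasigroup V) (H : κ → HoledSystem X A)
    (col : V → κ) : SV.colourAut col →* (mooreQuasigroup SX SV H col).autSubgroup where
  toFun g := ⟨(Equiv.refl X).sumCongr (g.1.prodCongr (Equiv.refl A)), by
    obtain ⟨g, hg, hcol⟩ := g
    rintro (x | ⟨v, a⟩) (y | ⟨w, b⟩)
    · simp
    · simp [hcol]
    · simp [hcol]
    · by_cases hvw : v = w
      · subst hvw
        rcases hc : (H (col v)).third a b with x | c <;> simp [hcol, hc]
      · simp [moore_inr_inr hvw, moore_inr_inr (g.injective.ne hvw), hg v w]⟩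
  map_one' := by
    ext p
    rcases p with x | ⟨v, a⟩ <;> simp
  map_mul' g h := by
    ext p
    rcases p with x | ⟨v, a⟩ <;> simp

lemma mooreAut_injective : Function.Injective (mooreAut SX SV H col) := fun g h hgh => by
  ext v
  simpa [mooreAut] using congrArg (fun Φ => Φ.1 (.inr (v, 0))) hgh

lemma mooreAut_surjective [Fintype X] [Fintype V] [Fintype A] [Nontrivial V]
    (hH : ∀ k, (H k).IsGenerating (Fintype.card V)) (hrigid : HoledSystem.IsRigidFamily H)
    (hX : Fintype.card X < 2 * Fintype.card A) : Function.Surjective (mooreAut SX SV H col) := by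
  rintro ⟨Φ, hΦ⟩
  obtain ⟨ρ, g, f, hρinj, hρ, hf⟩ := exists_fibrewise hH hX hΦ
  have hall (v : V) : col v = col (g v) ∧ f v = 1 :=
    hrigid _ _ (f v) ρ hρinj (isAffine_fibrewise hΦ hf v) (third_fibrewise hΦ hρ hf v)
  have hρid (x : X) : ρ x = x := by
    obtain ⟨v⟩ : Nonempty V := inferInstance
    have h := third_fibrewise hΦ hρ hf v 0 ((H (col v)).partner x 0)
    rw [(hall v).2, ← (hall v).1, HoledSystem.third_partner] at h
    simpa [HoledSystem.third_partner, eq_comm] using h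
  have hg : g ∈ SV.autSubgroup := fun v w => by
    by_cases hvw : v = w
    · rw [hvw, SV.op_self, SV.op_self]
    · exact (fibrewise_op hΦ hf hvw 0 0).1
  refine ⟨⟨g, hg, fun v => (hall v).1.symm⟩, ?_⟩
  ext p
  rcases p with x | ⟨v, a⟩
  · simp [mooreAut, hρ, hρid]
  · simp [mooreAut, hf, (hall v).2]

theorem nonempty_colourAut_mulEquiv_moore [Fintype X] [Fintype V] [Fintype A] [Nontrivial V]
    (hH : ∀ k, (H k).IsGenerating (Fintype.card V)) (hrigid : HoledSystem.IsRigidFamily H)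
    (hX : Fintype.card X < 2 * Fintype.card A) :
    Nonempty (SV.colourAut col ≃* (mooreQuasigroup SX SV H col).autSubgroup) :=
  ⟨.ofBijective (mooreAut SX SV H col) ⟨mooreAut_injective, mooreAut_surjective hH hrigid hX⟩⟩

end Automorphisms

end Moore

/-! ### Holed systems from differences -/

/-- The triples of a Steiner triple system on `X ⊕ A` which are not contained in the subsystem `X`,
given by the relation that `a`, `b : A` lie on a triple with third point `z`. -/
structure HoledRelation (X A : Type*) where
  /-- The relation that `{a, b, z}` is a triple. -/
  rel : A → A → X ⊕ A → Prop
  ne : ∀ {a b z}, rel a b z → a ≠ b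
  symm : ∀ {a b z}, rel a b z → rel b a z
  swap : ∀ {a b c}, rel a b (.inr c) → rel a c (.inr b)
  existsUnique_third : ∀ {a b}, a ≠ b → ∃! z, rel a b z
  existsUnique_partner : ∀ x a, ∃! b, rel a b (.inl x)

namespace HoledRelation

variable {X A : Type*} (R : HoledRelation X A)

/-- The third point of the triple through `a` and `b`, where degenerate triples are constant. -/
def third (a b : A) : X ⊕ A :=
  if h : a = b then .inr a else (R.existsUnique_third h).choose

variable {R} in
lemma third_eq_iff {a b : A} (hab : a ≠ b) {z : X ⊕ A} : R.third a b = z ↔ R.rel a b z := by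
  rw [third, dif_neg hab]
  have h := (R.existsUnique_third hab).choose_spec
  exact ⟨fun hz => hz ▸ h.1, fun hz => (h.2 z hz).symm⟩

lemma third_self (a : A) : R.third a a = .inr a := dif_pos rfl

variable {R} in
lemma third_eq_inl_iff {a b : A} {x : X} : R.third a b = .inl x ↔ R.rel a b (.inl x) := by
  by_cases hab : a = b
  · subst hab
    simpa only [third_self, reduceCtorEq, false_iff] using fun h => R.ne h rfl
  · exact third_eq_iff hab

/-- The holed system with the given triples. -/
def toHoledSystem : HoledSystem X A where
  third := R.third
  partner x a := (R.existsUnique_partner x a).choose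
  third_self := R.third_self
  third_comm a b := by
    by_cases hab : a = b
    · rw [hab]
    · exact (third_eq_iff hab).2 (R.symm ((third_eq_iff (Ne.symm hab)).1 rfl))
  third_eq_inr {a b c} h := by
    by_cases hab : a = b
    · subst hab
      rw [third_self, Sum.inr.injEq] at h
      rw [h, third_self]
    · have hc := R.swap ((third_eq_iff hab).1 h)
      exact (third_eq_iff (R.ne hc)).2 hc
  third_partner x a := third_eq_inl_iff.2 (R.existsUnique_partner x a).choose_spec.1
  partner_eq {x a b} h := ((R.existsUnique_partner x a).choose_spec.2 b (third_eq_inl_iff.1 h)).symm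

variable {R} in
lemma rel_map_iff {X' A' : Type*} {R' : HoledRelation X' A'} {f : A → A'} {ρ : X → X'}
    (hf : f.Injective) (hρ : ρ.Injective)
    (h : ∀ a b, R'.third (f a) (f b) = (R.third a b).map ρ f) {a b : A} {z : X ⊕ A} :
    R'.rel (f a) (f b) (z.map ρ f) ↔ R.rel a b z := by
  by_cases hab : a = b
  · subst hab
    exact iff_of_false (fun hz => R'.ne hz rfl) (fun hz => R.ne hz rfl)
  · rw [← third_eq_iff hab, ← third_eq_iff (hf.ne hab), h, (hρ.sumMap hf).eq_iff]

lemma card_add_card_add_one [Fintype X] [Fintype A] (a : A) :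
    Fintype.card X + #{b | ∃ c, R.rel a b (.inr c)} + 1 = Fintype.card A := by
  choose partner hpartner hunique using fun x => R.existsUnique_partner x a
  have hinj : partner.Injective := fun x y hxy =>
    Sum.inl_injective ((R.existsUnique_third (R.ne (hpartner x))).unique (hpartner x)
      (hxy ▸ hpartner y))
  have hdisj :
      Disjoint (univ.image partner) ({b | ∃ c, R.rel a b (.inr c)} : Finset A) := by
    rw [disjoint_left]
    intro b hb hc
    obtain ⟨x, -, rfl⟩ := mem_image.1 hb
    obtain ⟨c, hc⟩ := (mem_filter.1 hc).2
    exact Sum.inl_ne_inr ((R.existsUnique_third (R.ne hc)).unique (hpartner x) hc)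
  have hunion : univ.image partner ∪ ({b | ∃ c, R.rel a b (.inr c)} : Finset A) =
      univ.erase a := by
    ext b
    simp only [mem_union, mem_image, mem_univ, true_and, mem_filter, mem_erase, and_true]
    refine ⟨?_, fun hb => ?_⟩
    · rintro (⟨x, rfl⟩ | ⟨c, hc⟩)
      · exact (R.ne (hpartner x)).symm
      · exact (R.ne hc).symm
    · obtain ⟨x | c, hz, -⟩ := R.existsUnique_third (Ne.symm hb)
      · exact .inl ⟨x, (hunique x b hz).symm⟩
      · exact .inr ⟨c, hz⟩
  rw [← card_univ (α := X), ← card_image_of_injective _ hinj, ← card_union_of_disjoint hdisj,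
    hunion, card_erase_add_one (mem_univ a), card_univ]

end HoledRelation

lemma ne_add_one_zmod_two (x : ZMod 2) : x ≠ x + 1 := by decide +revert

lemma add_one_add_one_zmod_two (x : ZMod 2) : x + 1 + 1 = x := by decide +revert

lemma add_one_eq_zero_zmod_two_iff (x : ZMod 2) : x + 1 = 0 ↔ x ≠ 0 := by decide +revert

lemma eq_or_eq_add_one_zmod_two (x y : ZMod 2) : y = x ∨ y = x + 1 := by decide +revert

/-- Differences describing the triples of a holed system on `ZMod 2 × Z`, two copies of `Z`. Two
points have a pure difference if they lie in the same copy, and a mixed difference otherwise. Each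
pure difference belongs either to triangles `{(ε, i), (ε, i + δ), (ε + 1, i + e)}`, or to a prism,
whose edges are those of one pure and one mixed difference. The edges of a prism are split into
three perfect matchings, and every remaining mixed difference is a perfect matching by itself. -/
structure PrismData (Z : Type*) [AddCommGroup Z] where
  /-- The pairs of a pure difference `δ` and a mixed difference `e` of the triangles. -/
  triangles : Finset (Z × Z)
  /-- The pure differences of the prisms, one out of each pair `{d, -d}`. -/
  IsPrism : Z → Prop
  /-- The colour `colour d i` of the edge from `i` to `i + d`. -/
  colour : Z → Z → ZMod 3
  /-- The mixed difference in the prism of a given pure difference. -/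
  rungDiff : Z → Z
  triangles_neg : ∀ {δ e}, (δ, e) ∈ triangles → (-δ, e - δ) ∈ triangles
  mixed_unique : ∀ {δ e e'}, (δ, e) ∈ triangles → (δ, e') ∈ triangles → e = e'
  pure_unique : ∀ {δ δ' e}, (δ, e) ∈ triangles → (δ', e) ∈ triangles → δ = δ'
  neg_mixed_notMem : ∀ {δ δ' e}, (δ, e) ∈ triangles → (δ', -e) ∉ triangles
  pure_ne_zero : ∀ {δ e}, (δ, e) ∈ triangles → δ ≠ 0
  prism_ne_zero : ∀ {d}, IsPrism d → d ≠ 0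
  not_isPrism_neg : ∀ {d}, IsPrism d → ¬ IsPrism (-d)
  prism_notMem : ∀ {d e}, IsPrism d → (d, e) ∉ triangles
  pure_cover : ∀ d, d ≠ 0 → (∃ e, (d, e) ∈ triangles) ∨ IsPrism d ∨ IsPrism (-d)
  colour_ne : ∀ {d}, IsPrism d → ∀ i, colour d i ≠ colour d (i + d)
  rungDiff_injOn : ∀ {d d'}, IsPrism d → IsPrism d' → rungDiff d = rungDiff d' → d = d'
  rungDiff_ne : ∀ {d δ e}, IsPrism d → (δ, e) ∈ triangles → rungDiff d ≠ e
  rungDiff_ne_neg : ∀ {d δ e}, IsPrism d → (δ, e) ∈ triangles → rungDiff d ≠ -e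

namespace PrismData

section Rung

variable {Z : Type*} [AddCommGroup Z] {a b : ZMod 2 × Z}

/-- The neighbour of `a` in the perfect matching `(0, i) ↔ (1, i + e)`. -/
def rung (e : Z) (a : ZMod 2 × Z) : ZMod 2 × Z :=
  (a.1 + 1, if a.1 = 0 then a.2 + e else a.2 - e)

/-- The projection to `Z` identifying the points matched by `rung s`. -/
def proj (s : Z) (a : ZMod 2 × Z) : Z := if a.1 = 0 then a.2 else a.2 - s

lemma rung_rung (e : Z) (a : ZMod 2 × Z) : rung e (rung e a) = a := by
  by_cases ha : a.1 = 0 <;> ext <;>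
    simp [rung, ha, add_one_eq_zero_zmod_two_iff, add_one_add_one_zmod_two]

lemma rung_injective (a : ZMod 2 × Z) : (rung · a).Injective := fun e e' h => by
  by_cases ha : a.1 = 0 <;> simpa [rung, ha] using h

lemma rung_snd_sub (e : Z) (a : ZMod 2 × Z) : (rung e a).2 - a.2 = e ∨ (rung e a).2 - a.2 = -e := by
  by_cases ha : a.1 = 0 <;> simp [rung, ha]

lemma exists_eq_rung (h : b.1 = a.1 + 1) : ∃ e, b = rung e a := by
  by_cases ha : a.1 = 0
  · exact ⟨b.2 - a.2, Prod.ext h (by simp [rung, ha])⟩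
  · exact ⟨a.2 - b.2, Prod.ext h (by simp [rung, ha])⟩

lemma rung_fst_ne (e : Z) (a : ZMod 2 × Z) : (rung e a).1 ≠ a.1 := (ne_add_one_zmod_two _).symm

lemma proj_rung (s : Z) (a : ZMod 2 × Z) : proj s (rung s a) = proj s a := by
  by_cases ha : a.1 = 0 <;> simp [rung, proj, ha, add_one_eq_zero_zmod_two_iff]

lemma proj_add (s d : Z) (a : ZMod 2 × Z) : proj s (a + (0, d)) = proj s a + d := by
  by_cases ha : a.1 = 0 <;> simp [proj, ha, add_sub_right_comm]

lemma proj_sub (s d : Z) (a : ZMod 2 × Z) : proj s (a - (0, d)) = proj s a - d := by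
  rw [eq_sub_iff_add_eq, ← proj_add, sub_add_cancel]

lemma exists_proj_eq (s : Z) (ε : ZMod 2) (i : Z) : ∃ j, proj s (ε, j) = i := by
  by_cases hε : ε = 0
  · exact ⟨i, by simp [proj, hε]⟩
  · exact ⟨i + s, by simp [proj, hε]⟩

end Rung

variable {Z : Type*} [AddCommGroup Z] (P : PrismData Z)

/-- `a`, `b`, `c` form a triangle in which `a`, `b` lie in the same copy of `Z`. -/
def Tri₀ (a b c : ZMod 2 × Z) : Prop :=
  b.1 = a.1 ∧ c.1 = a.1 + 1 ∧ (b.2 - a.2, c.2 - a.2) ∈ P.triangles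

/-- `a`, `b`, `c` form a triangle. -/
def Tri (a b c : ZMod 2 × Z) : Prop := P.Tri₀ a b c ∨ P.Tri₀ a c b ∨ P.Tri₀ b c a

/-- The edge `a b` has colour `k` in the prism of difference `d`. Each point lies on two edges of
the pure difference, and the third colour is used for the edge of the mixed difference. -/
def PrismEdge (d : Z) (k : ZMod 3) (a b : ZMod 2 × Z) : Prop :=
  let i := proj (P.rungDiff d) a
  P.IsPrism d ∧ (b = a + (0, d) ∧ P.colour d i = k ∨ b = a - (0, d) ∧ P.colour d (i - d) = k ∨
    b = rung (P.rungDiff d) a ∧ P.colour d i + P.colour d (i - d) + k = 0)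

/-- The mixed differences occurring neither in triangles nor in prisms. -/
def FreeMixed (e : Z) : Prop :=
  (∀ δ, (δ, e) ∉ P.triangles) ∧ (∀ δ, (δ, -e) ∉ P.triangles) ∧ ∀ d, P.IsPrism d → e ≠ P.rungDiff d

/-- The edges of the matching with a given label: a colour class of a prism, or a free mixed
difference. -/
def Edge : (Z × ZMod 3) ⊕ Z → ZMod 2 × Z → ZMod 2 × Z → Prop
  | .inl (d, k), a, b => P.PrismEdge d k a b
  | .inr e, a, b => P.FreeMixed e ∧ b = rung e a

/-- The labels of nonempty matchings. -/
def Valid : (Z × ZMod 3) ⊕ Z → Prop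
  | .inl (d, _) => P.IsPrism d
  | .inr e => P.FreeMixed e

variable {P} {a b c c' : ZMod 2 × Z} {d d' : Z} {k k' : ZMod 3} {l l' : (Z × ZMod 3) ⊕ Z}

lemma Tri₀.symm (h : P.Tri₀ a b c) : P.Tri₀ b a c := by
  refine ⟨h.1.symm, by rw [h.1, h.2.1], ?_⟩
  simpa only [neg_sub, sub_sub_sub_cancel_right] using P.triangles_neg h.2.2

lemma Tri.symm (h : P.Tri a b c) : P.Tri b a c := by
  rcases h with h | h | h
  · exact .inl h.symm
  · exact .inr (.inr h)
  · exact .inr (.inl h)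

lemma Tri.swap (h : P.Tri a b c) : P.Tri a c b := by
  rcases h with h | h | h
  · exact .inr (.inl h)
  · exact .inl h
  · exact .inr (.inr h.symm)

lemma Tri.ne (h : P.Tri a b c) : a ≠ b := by
  rintro rfl
  rcases h with h | h | h
  · exact P.pure_ne_zero h.2.2 (sub_self _)
  · exact ne_add_one_zmod_two _ h.2.1
  · exact ne_add_one_zmod_two _ h.2.1

lemma Tri.unique (h : P.Tri a b c) (h' : P.Tri a b c') : c = c' := by
  rcases h with h | h | h <;> rcases h' with h' | h' | h'
  · exact Prod.ext (h.2.1.trans h'.2.1.symm) (sub_left_injective (P.mixed_unique h.2.2 h'.2.2))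
  · exact absurd (h.1.symm.trans h'.2.1) (ne_add_one_zmod_two _)
  · exact absurd (h.1.trans h'.2.1) (ne_add_one_zmod_two _)
  · exact absurd (h'.1.symm.trans h.2.1) (ne_add_one_zmod_two _)
  · exact Prod.ext (h.1.trans h'.1.symm) (sub_left_injective (P.pure_unique h.2.2 h'.2.2))
  · exact absurd (neg_sub b.2 a.2 ▸ h'.2.2) (P.neg_mixed_notMem h.2.2)
  · exact absurd (h'.1.trans h.2.1) (ne_add_one_zmod_two _)
  · exact absurd (neg_sub a.2 b.2 ▸ h'.2.2) (P.neg_mixed_notMem h.2.2)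
  · exact Prod.ext (h.1.trans h'.1.symm) (sub_left_injective (P.pure_unique h.2.2 h'.2.2))

lemma PrismEdge.symm (h : P.PrismEdge d k a b) : P.PrismEdge d k b a := by
  obtain ⟨hd, ⟨rfl, hk⟩ | ⟨rfl, hk⟩ | ⟨rfl, hk⟩⟩ := h
  · refine ⟨hd, .inr (.inl ⟨(add_sub_cancel_right _ _).symm, ?_⟩)⟩
    rwa [proj_add, add_sub_cancel_right]
  · exact ⟨hd, .inl ⟨(sub_add_cancel _ _).symm, by rwa [proj_sub]⟩⟩
  · exact ⟨hd, .inr (.inr ⟨(rung_rung _ _).symm, by rwa [proj_rung]⟩)⟩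

lemma Edge.symm (h : P.Edge l a b) : P.Edge l b a := by
  rcases l with ⟨d, k⟩ | e
  · exact PrismEdge.symm h
  · exact ⟨h.1, by rw [h.2, rung_rung]⟩

lemma Edge.valid (h : P.Edge l a b) : P.Valid l := by
  rcases l with ⟨d, k⟩ | e <;> exact h.1

lemma Edge.ne (h : P.Edge l a b) : a ≠ b := by
  rintro rfl
  rcases l with ⟨d, k⟩ | e
  · obtain ⟨hd, ⟨h, -⟩ | ⟨h, -⟩ | ⟨h, -⟩⟩ := h
    · exact P.prism_ne_zero hd (congrArg Prod.snd (left_eq_add.1 h))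
    · exact P.prism_ne_zero hd (congrArg Prod.snd (sub_eq_self.1 h.symm))
    · exact rung_fst_ne _ a (congrArg Prod.fst h).symm
  · exact rung_fst_ne _ a (congrArg Prod.fst h.2).symm

lemma PrismEdge.of_fst_eq (h : P.PrismEdge d k a b) (hab : b.1 = a.1) :
    b = a + (0, d) ∧ P.colour d (proj (P.rungDiff d) a) = k ∨
      b = a - (0, d) ∧ P.colour d (proj (P.rungDiff d) a - d) = k := by
  obtain ⟨-, h | h | h⟩ := h
  · exact .inl h
  · exact .inr h
  · exact absurd (h.1 ▸ hab) (rung_fst_ne _ a)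

lemma PrismEdge.of_fst_eq_add_one (h : P.PrismEdge d k a b) (hab : b.1 = a.1 + 1) :
    b = rung (P.rungDiff d) a ∧ P.colour d (proj (P.rungDiff d) a) +
      P.colour d (proj (P.rungDiff d) a - d) + k = 0 := by
  obtain ⟨-, ⟨rfl, -⟩ | ⟨rfl, -⟩ | h⟩ := h
  · simp at hab
  · simp at hab
  · exact h

lemma Edge.fst_eq_add_one {e : Z} (h : P.Edge (.inr e) a b) : b.1 = a.1 + 1 := h.2 ▸ rfl

lemma not_edge_inr_mk {e : Z} {ε : ZMod 2} {i j : Z} : ¬ P.Edge (.inr e) (ε, i) (ε, j) :=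
  fun h => ne_add_one_zmod_two _ h.fst_eq_add_one

lemma edge_inl_mk_iff {ε : ZMod 2} {i j : Z} : P.Edge (.inl (d, k)) (ε, i) (ε, j) ↔ P.IsPrism d ∧
    (j = i + d ∧ P.colour d (proj (P.rungDiff d) (ε, i)) = k ∨
      i = j + d ∧ P.colour d (proj (P.rungDiff d) (ε, j)) = k) := by
  have hedge {i : Z} (hd : P.IsPrism d) (hk : P.colour d (proj (P.rungDiff d) (ε, i)) = k) :
      P.PrismEdge d k (ε, i) (ε, i + d) := ⟨hd, .inl ⟨by simp, hk⟩⟩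
  refine ⟨fun h => ⟨h.1, ?_⟩, ?_⟩
  · rcases PrismEdge.of_fst_eq h rfl with ⟨hj, hk⟩ | ⟨hj, hk⟩
    · exact .inl ⟨congrArg Prod.snd hj, hk⟩
    · obtain rfl : j = i - d := congrArg Prod.snd hj
      exact .inr ⟨(sub_add_cancel i d).symm, by rwa [← proj_sub, Prod.mk_sub_mk, sub_zero] at hk⟩
  · rintro ⟨hd, ⟨rfl, hk⟩ | ⟨rfl, hk⟩⟩
    · exact hedge hd hk
    · exact (hedge hd hk).symm

lemma PrismEdge.unique (h : P.PrismEdge d k a b) (h' : P.PrismEdge d' k' a b) :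
    d = d' ∧ k = k' := by
  rcases eq_or_eq_add_one_zmod_two a.1 b.1 with hab | hab
  · rcases h.of_fst_eq hab with ⟨rfl, hk⟩ | ⟨rfl, hk⟩ <;>
      rcases h'.of_fst_eq hab with ⟨hd, hk'⟩ | ⟨hd, hk'⟩
    · obtain rfl : d = d' := by simpa using hd
      exact ⟨rfl, hk.symm.trans hk'⟩
    · obtain rfl : d = -d' := by simpa [sub_eq_add_neg] using hd
      exact absurd h.1 (P.not_isPrism_neg h'.1)
    · obtain rfl : -d = d' := by simpa [sub_eq_add_neg] using hd
      exact absurd h'.1 (P.not_isPrism_neg h.1)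
    · obtain rfl : d = d' := by simpa using hd
      exact ⟨rfl, hk.symm.trans hk'⟩
  · obtain ⟨hb, hk⟩ := h.of_fst_eq_add_one hab
    obtain ⟨hb', hk'⟩ := h'.of_fst_eq_add_one hab
    obtain rfl := P.rungDiff_injOn h.1 h'.1 (rung_injective a (hb.symm.trans hb'))
    exact ⟨rfl, add_left_cancel (hk.trans hk'.symm)⟩

lemma FreeMixed.not_prismEdge {e : Z} (he : P.FreeMixed e) : ¬ P.PrismEdge d k a (rung e a) :=
  fun h => he.2.2 d h.1 (rung_injective a (h.of_fst_eq_add_one rfl).1)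

lemma Edge.unique (h : P.Edge l a b) (h' : P.Edge l' a b) : l = l' := by
  rcases l with ⟨d, k⟩ | e <;> rcases l' with ⟨d', k'⟩ | e'
  · obtain ⟨rfl, rfl⟩ := PrismEdge.unique h h'
    rfl
  · exact absurd (h'.2 ▸ h) h'.1.not_prismEdge
  · exact absurd (h.2 ▸ h') h.1.not_prismEdge
  · rw [rung_injective a (h.2.symm.trans h'.2)]

lemma Tri₀.not_edge (h : P.Tri₀ a b c) : ¬ P.Edge l a b := by
  intro h'
  rcases l with ⟨d, k⟩ | e
  · rcases PrismEdge.of_fst_eq h' h.1 with ⟨rfl, -⟩ | ⟨rfl, -⟩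
    · exact P.prism_notMem h'.1 (by simpa using h.2.2)
    · exact P.prism_notMem h'.1 (by simpa using P.triangles_neg h.2.2)
  · exact ne_add_one_zmod_two _ (h.1.symm.trans h'.fst_eq_add_one)

lemma Tri₀.not_edge_third (h : P.Tri₀ a b c) : ¬ P.Edge l a c := by
  intro h'
  rcases l with ⟨d, k⟩ | e
  · obtain ⟨rfl, -⟩ := PrismEdge.of_fst_eq_add_one h' h.2.1
    rcases rung_snd_sub (P.rungDiff d) a with hd | hd
    · exact P.rungDiff_ne h'.1 h.2.2 hd.symm
    · exact P.rungDiff_ne_neg h'.1 h.2.2 (neg_eq_iff_eq_neg.1 hd.symm)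
  · obtain ⟨hfree, rfl⟩ := h'
    rcases rung_snd_sub e a with he | he
    · exact hfree.1 _ (he ▸ h.2.2)
    · exact hfree.2.1 _ (he ▸ h.2.2)

lemma Tri.not_edge (h : P.Tri a b c) : ¬ P.Edge l a b := by
  rcases h with h | h | h
  · exact h.not_edge
  · exact h.not_edge_third
  · exact fun h' => h.not_edge_third h'.symm

lemma exists_tri_or_edge_of_fst_eq (hab : a ≠ b) (h : b.1 = a.1) :
    (∃ c, P.Tri a b c) ∨ ∃ l, P.Edge l a b := by
  have hb : b = a + (0, b.2 - a.2) := Prod.ext (by simp [h]) (by simp)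
  have hne : b.2 - a.2 ≠ 0 := fun hd => hab (by rw [hb, hd]; simp)
  rcases P.pure_cover _ hne with ⟨e, he⟩ | hd | hd
  · exact .inl ⟨(a.1 + 1, a.2 + e), .inl ⟨h, rfl, by simpa using he⟩⟩
  · exact .inr ⟨.inl (b.2 - a.2, _), hd, .inl ⟨hb, rfl⟩⟩
  · refine .inr ⟨.inl (-(b.2 - a.2), _), hd, .inr (.inl ⟨?_, rfl⟩)⟩
    exact Prod.ext (by simp [h]) (by simp)

lemma exists_tri_or_edge_of_fst_eq_add_one (h : b.1 = a.1 + 1) :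
    (∃ c, P.Tri a b c) ∨ ∃ l, P.Edge l a b := by
  by_cases h₁ : ∃ δ, (δ, b.2 - a.2) ∈ P.triangles
  · obtain ⟨δ, hδ⟩ := h₁
    exact .inl ⟨(a.1, a.2 + δ), .inr (.inl ⟨rfl, h, by simpa using hδ⟩)⟩
  by_cases h₂ : ∃ δ, (δ, -(b.2 - a.2)) ∈ P.triangles
  · obtain ⟨δ, hδ⟩ := h₂
    refine .inl ⟨(b.1, b.2 + δ), .inr (.inr ⟨rfl, ?_, by simpa using hδ⟩)⟩
    rw [h, add_one_add_one_zmod_two]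
  obtain ⟨e, rfl⟩ := exists_eq_rung h
  by_cases h₃ : ∃ d, P.IsPrism d ∧ e = P.rungDiff d
  · obtain ⟨d, hd, rfl⟩ := h₃
    exact .inr ⟨.inl (d, _), hd, .inr (.inr ⟨rfl, add_neg_cancel _⟩)⟩
  push Not at h₁ h₂ h₃
  refine .inr ⟨.inr e, ⟨?_, ?_, h₃⟩, rfl⟩ <;> rcases rung_snd_sub e a with he | he <;>
    simp_all only [neg_neg, not_false_eq_true, implies_true]

lemma exists_tri_or_edge (hab : a ≠ b) : (∃ c, P.Tri a b c) ∨ ∃ l, P.Edge l a b :=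
  (eq_or_eq_add_one_zmod_two a.1 b.1).elim (exists_tri_or_edge_of_fst_eq hab)
    exists_tri_or_edge_of_fst_eq_add_one

lemma existsUnique_prismEdge (hd : P.IsPrism d) (k : ZMod 3) (a : ZMod 2 × Z) :
    ∃! b, P.PrismEdge d k a b := by
  have hne := P.colour_ne hd (proj (P.rungDiff d) a - d)
  rw [sub_add_cancel] at hne
  simp only [PrismEdge, hd, true_and]
  generalize P.colour d (proj (P.rungDiff d) a) = x at hne ⊢
  generalize P.colour d (proj (P.rungDiff d) a - d) = y at hne ⊢
  have hcolours : (x = k ∧ y ≠ k ∧ x + y + k ≠ 0) ∨ (x ≠ k ∧ y = k ∧ x + y + k ≠ 0) ∨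
      (x ≠ k ∧ y ≠ k ∧ x + y + k = 0) := by decide +revert
  rcases hcolours with ⟨rfl, hy, hsum⟩ | ⟨hx, rfl, hsum⟩ | ⟨hx, hy, hsum⟩
  · simp only [hy, hsum, and_true, and_false, or_false, existsUnique_eq]
  · simp only [hx, hsum, and_true, and_false, or_false, false_or, existsUnique_eq]
  · simp only [hx, hy, hsum, and_true, and_false, false_or, existsUnique_eq]

lemma existsUnique_edge (hl : P.Valid l) (a : ZMod 2 × Z) : ∃! b, P.Edge l a b := by
  rcases l with ⟨d, k⟩ | e
  · exact existsUnique_prismEdge hl k a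
  · exact ⟨rung e a, ⟨hl, rfl⟩, fun b hb => hb.2⟩

variable (P) in
/-- The triples described by `P`, where the points of `X` are the labels of the matchings. -/
def holedRelation {X : Type*} (θ : X ≃ {l // P.Valid l}) : HoledRelation X (ZMod 2 × Z) where
  rel a b z := z.elim (fun x => P.Edge (θ x).1 a b) (P.Tri a b)
  ne {a b z} h := by
    rcases z with x | c
    · exact Edge.ne h
    · exact Tri.ne h
  symm {a b z} h := by
    rcases z with x | c
    · exact Edge.symm h
    · exact Tri.symm h
  swap h := Tri.swap h
  existsUnique_third {a b} hab := by
    refine existsUnique_of_exists_of_unique ?_ ?_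
    · rcases P.exists_tri_or_edge hab with ⟨c, hc⟩ | ⟨l, hl⟩
      · exact ⟨.inr c, hc⟩
      · refine ⟨.inl (θ.symm ⟨l, hl.valid⟩), ?_⟩
        simpa only [Sum.elim_inl, Equiv.apply_symm_apply] using hl
    · rintro (x | c) (y | c') h h'
      · exact congrArg Sum.inl (θ.injective (Subtype.ext (Edge.unique h h')))
      · exact absurd h (Tri.not_edge h')
      · exact absurd h' (Tri.not_edge h)
      · exact congrArg Sum.inr (Tri.unique h h')
  existsUnique_partner x a := existsUnique_edge (θ x).2 a

lemma exists_tri_zero_iff {b : ZMod 2 × Z} :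
    (∃ c, P.Tri 0 b c) ↔ ∃ p ∈ P.triangles, b = (0, p.1) ∨ b = (1, p.2) ∨ b = (1, -p.2) := by
  have h10 : (1 : ZMod 2) + 1 = 0 := by decide
  constructor
  · rintro ⟨c, ⟨hb, -, h⟩ | ⟨-, hb, h⟩ | ⟨-, hb, h⟩⟩
    · exact ⟨_, h, .inl (Prod.ext hb (by simp))⟩
    · exact ⟨_, h, .inr (.inl (Prod.ext (by simpa using hb) (by simp)))⟩
    · refine ⟨_, h, .inr (.inr (Prod.ext ?_ (by simp)))⟩
      rw [← add_one_add_one_zmod_two b.1, ← hb]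
      rfl
  · rintro ⟨⟨δ, e⟩, h, rfl | rfl | rfl⟩
    · exact ⟨(1, e), .inl ⟨rfl, rfl, by simpa using h⟩⟩
    · exact ⟨(0, δ), .inr (.inl ⟨rfl, rfl, by simpa using h⟩)⟩
    · exact ⟨(1, -e + δ), .inr (.inr ⟨rfl, h10.symm, by simpa using h⟩)⟩

lemma card_tri_zero [Fintype Z] : #{b | ∃ c, P.Tri 0 b c} = 3 * #P.triangles := by
  have heq : ({b | ∃ c, P.Tri 0 b c} : Finset (ZMod 2 × Z)) =
      P.triangles.image (fun p => ((0 : ZMod 2), p.1)) ∪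
        (P.triangles.image (fun p => ((1 : ZMod 2), p.2)) ∪
          P.triangles.image (fun p => ((1 : ZMod 2), -p.2))) := by
    ext b
    simp only [mem_filter_univ, exists_tri_zero_iff, mem_union, mem_image, eq_comm (a := b),
      and_or_left, exists_or]
  rw [heq, card_union_of_disjoint, card_union_of_disjoint, card_image_of_injOn,
    card_image_of_injOn, card_image_of_injOn]
  · ring
  · rintro ⟨δ, e⟩ h ⟨δ', e'⟩ h' hh
    obtain rfl : e = e' := by simpa using hh
    rw [P.pure_unique h h']
  · rintro ⟨δ, e⟩ h ⟨δ', e'⟩ h' hh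
    obtain rfl : e = e' := by simpa using hh
    rw [P.pure_unique h h']
  · rintro ⟨δ, e⟩ h ⟨δ', e'⟩ h' hh
    obtain rfl : δ = δ' := by simpa using hh
    rw [P.mixed_unique h h']
  · simp only [disjoint_left, mem_image, not_exists, not_and, forall_exists_index, and_imp]
    rintro _ ⟨δ, e⟩ h rfl ⟨δ', e'⟩ h' hh
    obtain rfl : -e' = e := by simpa using hh
    exact P.neg_mixed_notMem h' h
  · simp only [disjoint_left, mem_union, mem_image]
    rintro _ ⟨p, -, rfl⟩ (⟨q, -, hq⟩ | ⟨q, -, hq⟩) <;> simp at hq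

theorem card_valid [Fintype Z] :
    Fintype.card {l // P.Valid l} + 3 * #P.triangles + 1 = 2 * Fintype.card Z := by
  have h := (P.holedRelation (Equiv.refl _)).card_add_card_add_one 0
  rw [Fintype.card_prod, ZMod.card] at h
  rwa [← card_tri_zero]

end PrismData

/-! ### Rigid families of holed systems -/

lemma eq_of_intCast_zmod_eq {c : ℕ} {x y : ℤ} (h : (x : ZMod c) = y) (hxy : x - y < c)
    (hyx : y - x < c) : x = y := by
  rw [ZMod.intCast_eq_intCast_iff_dvd_sub] at h
  have := Int.eq_zero_of_abs_lt_dvd h (abs_lt.2 ⟨by omega, by omega⟩)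
  omega

lemma addMonoidHom_zmod_odd_two_eq_zero {c : ℕ} (hc : Odd c) (φ : ZMod c →+ ZMod 2) : φ = 0 := by
  ext1 i
  obtain ⟨j, rfl⟩ := (isUnit_two_zmod hc).dvd (a := i)
  rw [two_mul, map_add, CharTwo.add_self_eq_zero, AddMonoidHom.zero_apply]

lemma addMonoidHom_zmod_two_odd_eq_zero {c : ℕ} (hc : Odd c) (φ : ZMod 2 →+ ZMod c) : φ = 0 := by
  ext1 ε
  rw [AddMonoidHom.zero_apply, ← (isUnit_two_zmod hc).mul_right_eq_zero, two_mul, ← map_add,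
    CharTwo.add_self_eq_zero, map_zero]

theorem exists_eq_of_isAffine {c : ℕ} (hc : Odd c) {f : Equiv.Perm (ZMod 2 × ZMod c)}
    (hf : IsAffine f) : ∃ ε₀ u t, ∀ ε i, f (ε, i) = (ε + ε₀, u * i + t) := by
  let φ : ZMod 2 × ZMod c →+ ZMod 2 × ZMod c := AddMonoidHom.mk' (fun a => f a - f 0) fun a b => by
    rw [eq_sub_of_add_eq (hf a b)]
    abel
  have hφ a : f a = φ a + f 0 := (sub_add_cancel _ _).symm
  have hsnd ε : (φ (ε, 0)).2 = 0 := DFunLike.congr_fun (addMonoidHom_zmod_two_odd_eq_zero hc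
    ((AddMonoidHom.snd _ _).comp (φ.comp (AddMonoidHom.inl _ _)))) ε
  have hfst i : (φ (0, i)).1 = 0 := DFunLike.congr_fun (addMonoidHom_zmod_odd_two_eq_zero hc
    ((AddMonoidHom.fst _ _).comp (φ.comp (AddMonoidHom.inr _ _)))) i
  have hone : (φ (1, 0)).1 = 1 := by
    refine (eq_or_eq_add_one_zmod_two 0 _).resolve_left fun h => ?_
    have hφ0 : φ (1, 0) = 0 := Prod.ext h (hsnd 1)
    have hf0 : f (1, 0) = f 0 := by rw [hφ, hφ0, zero_add]
    exact one_ne_zero (congrArg Prod.fst (f.injective hf0))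
  have hε ε : (φ (ε, 0)).1 = ε := by
    rcases eq_or_eq_add_one_zmod_two 0 ε with rfl | rfl
    · exact hfst 0
    · exact hone
  have hi i : (φ (0, i)).2 = (φ (0, 1)).2 * i := by
    have h := ZMod.map_smul ((AddMonoidHom.snd _ _).comp (φ.comp (AddMonoidHom.inr _ _))) i 1
    rw [smul_eq_mul, mul_one, smul_eq_mul, mul_comm] at h
    exact h
  refine ⟨(f 0).1, (φ (0, 1)).2, (f 0).2, fun ε i => ?_⟩
  have hadd : φ (ε, i) = φ (ε, 0) + φ (0, i) := by
    rw [← map_add, Prod.mk_add_mk, zero_add, add_zero]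
  rw [hφ, hadd]
  exact Prod.ext (by rw [Prod.fst_add, Prod.fst_add, hε, hfst, add_zero])
    (by rw [Prod.snd_add, Prod.snd_add, hsnd, hi, zero_add])

namespace CyclicPrism

variable {c m D k l : ℕ}

/-- The sizes for which the prism data below are defined on `ZMod c`, with `2 * m` pure differences
in triangles, the least one being `D`. The number `k` is an index for nonisomorphic systems. -/
structure IsAdmissible (c m D k : ℕ) : Prop where
  odd : Odd c
  one_le : 1 ≤ m
  two_mul_add_ten_le : 2 * m + 10 ≤ D
  le : 20 * D + 4 * k ≤ c

lemma IsAdmissible.mono (h : IsAdmissible c m D l) (hkl : k ≤ l) : IsAdmissible c m D k :=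
  ⟨h.odd, h.one_le, h.two_mul_add_ten_le, by have := h.le; omega⟩

/-- The integers of least absolute value representing the differences of the triangles. The pure
differences are `±(D + 2 * j)` for `j < m`, and `D + 2 * j` goes with the mixed one `j + 1`. -/
def IsTriangle (m D : ℕ) (x y : ℤ) : Prop :=
  2 * y = x - D + 2 ∧ (D ≤ x ∧ x < D + 2 * m ∨ -x < D + 2 * m ∧ D ≤ -x)

lemma IsTriangle.neg {x y : ℤ} (h : IsTriangle m D x y) : IsTriangle m D (-x) (y - x) := by
  obtain ⟨hy, hx⟩ := h
  exact ⟨by omega, by omega⟩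

/-- The differences of the triangles. -/
def triangles (c m D : ℕ) : Finset (ZMod c × ZMod c) :=
  ((range m).image fun j : ℕ => (((D + 2 * j : ℤ) : ZMod c), ((j + 1 : ℤ) : ZMod c))) ∪
    (range m).image fun j : ℕ => (((-(D + 2 * j) : ℤ) : ZMod c), ((1 - D - j : ℤ) : ZMod c))

lemma mem_triangles {δ e : ZMod c} :
    (δ, e) ∈ triangles c m D ↔ ∃ x y : ℤ, IsTriangle m D x y ∧ δ = x ∧ e = y := by
  simp only [triangles, mem_union, mem_image, mem_range, Prod.mk.injEq]
  constructor
  · rintro (⟨j, hj, hδ, he⟩ | ⟨j, hj, hδ, he⟩)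
    · exact ⟨_, _, ⟨by ring, .inl (by omega)⟩, hδ.symm, he.symm⟩
    · exact ⟨_, _, ⟨by ring, .inr (by omega)⟩, hδ.symm, he.symm⟩
  · rintro ⟨x, y, ⟨hxy, h | h⟩, rfl, rfl⟩
    · refine .inl ⟨(y - 1).toNat, by omega, ?_, ?_⟩ <;> congr 1 <;> omega
    · refine .inr ⟨(1 - D - y).toNat, by omega, ?_, ?_⟩ <;> congr 1 <;> omega

namespace IsAdmissible

lemma card_triangles (h : IsAdmissible c m D k) : #(triangles c m D) = 2 * m := by
  obtain ⟨-, -, hm, hc⟩ := h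
  rw [triangles, card_union_of_disjoint, card_image_of_injOn, card_image_of_injOn, card_range,
    two_mul]
  · intro j hj j' hj' hjj'
    have := eq_of_intCast_zmod_eq (congrArg Prod.fst hjj')
    simp only [coe_range, Set.mem_Iio] at hj hj'
    omega
  · intro j hj j' hj' hjj'
    have := eq_of_intCast_zmod_eq (congrArg Prod.fst hjj')
    simp only [coe_range, Set.mem_Iio] at hj hj'
    omega
  · rw [disjoint_left]
    intro p hp hp'
    obtain ⟨j, hj, rfl⟩ := mem_image.1 hp
    obtain ⟨j', hj', hjj'⟩ := mem_image.1 hp'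
    have := eq_of_intCast_zmod_eq (congrArg Prod.fst hjj')
    simp only [mem_range] at hj hj'
    omega

lemma mixed_unique (h : IsAdmissible c m D k) {δ e e' : ZMod c} (he : (δ, e) ∈ triangles c m D)
    (he' : (δ, e') ∈ triangles c m D) : e = e' := by
  obtain ⟨-, -, hm, hc⟩ := h
  obtain ⟨x, y, ⟨hy, hx⟩, rfl, rfl⟩ := mem_triangles.1 he
  obtain ⟨x', y', ⟨hy', hx'⟩, hxx', rfl⟩ := mem_triangles.1 he'
  have := eq_of_intCast_zmod_eq hxx' (by omega) (by omega)
  rw [show y = y' by omega]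

lemma pure_unique (h : IsAdmissible c m D k) {δ δ' e : ZMod c} (he : (δ, e) ∈ triangles c m D)
    (he' : (δ', e) ∈ triangles c m D) : δ = δ' := by
  obtain ⟨-, -, hm, hc⟩ := h
  obtain ⟨x, y, ⟨hy, hx⟩, rfl, rfl⟩ := mem_triangles.1 he
  obtain ⟨x', y', ⟨hy', hx'⟩, rfl, hyy'⟩ := mem_triangles.1 he'
  have := eq_of_intCast_zmod_eq hyy' (by omega) (by omega)
  rw [show x = x' by omega]

lemma neg_mixed_notMem (h : IsAdmissible c m D k) {δ δ' e : ZMod c}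
    (he : (δ, e) ∈ triangles c m D) : (δ', -e) ∉ triangles c m D := by
  obtain ⟨-, -, hm, hc⟩ := h
  intro he'
  obtain ⟨x, y, ⟨hy, hx⟩, rfl, rfl⟩ := mem_triangles.1 he
  obtain ⟨x', y', ⟨hy', hx'⟩, rfl, hyy'⟩ := mem_triangles.1 he'
  rw [← Int.cast_neg] at hyy'
  have := eq_of_intCast_zmod_eq hyy' (by omega) (by omega)
  omega

lemma pure_ne_zero (h : IsAdmissible c m D k) {δ e : ZMod c} (he : (δ, e) ∈ triangles c m D) :
    δ ≠ 0 := by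
  obtain ⟨-, -, hm, hc⟩ := h
  obtain ⟨x, y, ⟨hy, hx⟩, rfl, rfl⟩ := mem_triangles.1 he
  intro hx0
  rw [← Int.cast_zero] at hx0
  have := eq_of_intCast_zmod_eq hx0 (by omega) (by omega)
  omega

end IsAdmissible

/-- The pure differences of the prisms: representatives up to sign of those not occurring in
triangles. -/
def IsPrism (c m D : ℕ) (d : ZMod c) : Prop :=
  1 ≤ d.val ∧ 2 * d.val < c ∧ ∀ y : ℤ, ¬ IsTriangle m D d.val y

lemma IsPrism.ne_zero {d : ZMod c} (hd : IsPrism c m D d) : d ≠ 0 := by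
  rintro rfl
  simpa using hd.1

lemma IsPrism.not_neg [NeZero c] {d : ZMod c} (hd : IsPrism c m D d) : ¬ IsPrism c m D (-d) := by
  have : NeZero d := ⟨hd.ne_zero⟩
  intro hd'
  have h₁ := hd.2.1
  have h₂ := hd'.2.1
  rw [ZMod.val_neg_of_ne_zero] at h₂
  omega

lemma IsAdmissible.prism_notMem [NeZero c] (h : IsAdmissible c m D k) {d e : ZMod c}
    (hd : IsPrism c m D d) : (d, e) ∉ triangles c m D := by
  obtain ⟨-, -, hm, hc⟩ := h
  obtain ⟨-, hlt, hd⟩ := hd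
  intro he
  obtain ⟨x, y, hxy, hdx, rfl⟩ := mem_triangles.1 he
  have hx := hxy.2
  rw [← ZMod.natCast_zmod_val d, ← Int.cast_natCast] at hdx
  have := eq_of_intCast_zmod_eq hdx (by omega) (by omega)
  exact hd y (this ▸ hxy)

lemma mem_triangles_or_isPrism [NeZero c] {d : ZMod c} (hd : d ≠ 0) (hlt : 2 * d.val < c) :
    (∃ e, (d, e) ∈ triangles c m D) ∨ IsPrism c m D d := by
  by_cases h : ∃ y, IsTriangle m D d.val y
  · obtain ⟨y, hy⟩ := h
    exact .inl ⟨y, mem_triangles.2 ⟨_, y, hy, by simp, rfl⟩⟩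
  · exact .inr ⟨Nat.one_le_iff_ne_zero.2 ((ZMod.val_ne_zero d).2 hd), hlt, not_exists.1 h⟩

lemma triangles_neg {δ e : ZMod c} (h : (δ, e) ∈ triangles c m D) :
    (-δ, e - δ) ∈ triangles c m D := by
  obtain ⟨x, y, hxy, rfl, rfl⟩ := mem_triangles.1 h
  exact mem_triangles.2 ⟨-x, y - x, hxy.neg, by simp, by simp⟩

lemma pure_cover [NeZero c] (hc : Odd c) {d : ZMod c} (hd : d ≠ 0) :
    (∃ e, (d, e) ∈ triangles c m D) ∨ IsPrism c m D d ∨ IsPrism c m D (-d) := by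
  have : NeZero d := ⟨hd⟩
  have hneg : (-d).val = c - d.val := ZMod.val_neg_of_ne_zero d
  have hodd : 2 * d.val ≠ c := fun h => Nat.not_odd_iff_even.2 ⟨d.val, by omega⟩ hc
  by_cases h : 2 * d.val < c
  · exact (mem_triangles_or_isPrism hd h).imp_right .inl
  · have hlt : 2 * (-d).val < c := by
      have := ZMod.val_lt d
      omega
    rcases mem_triangles_or_isPrism (m := m) (D := D) (neg_ne_zero.2 hd) hlt with ⟨e, he⟩ | h
    · exact .inl ⟨e - -d, by simpa using triangles_neg he⟩
    · exact .inr (.inr h)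

/-- The colour of the edge from `i` to `i + d` of the cycles of difference `d`. The edges with
`c ≤ i + d` wrap around, and the others are coloured alternately along the cycles. -/
def colour (d i : ZMod c) : ZMod 3 :=
  if c ≤ i.val + d.val then 2 else if i.val / d.val % 2 = 0 then 0 else 1

lemma colour_ne [NeZero c] {d : ZMod c} (hd : IsPrism c m D d) (i : ZMod c) :
    colour d i ≠ colour d (i + d) := by
  have h₀₁ : (0 : ZMod 3) ≠ 1 := by decide
  have h₀₂ : (0 : ZMod 3) ≠ 2 := by decide
  have h₁₂ : (1 : ZMod 3) ≠ 2 := by decide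
  obtain ⟨hpos, hlt, -⟩ := hd
  have hi := ZMod.val_lt i
  unfold colour
  by_cases h : c ≤ i.val + d.val
  · have hval : (i + d).val = i.val + d.val - c := by
      have := ZMod.val_add_val_of_le h
      omega
    have hquot : (i + d).val / d.val = 0 := Nat.div_eq_of_lt (by omega)
    rw [if_pos h, if_neg (by omega), hquot, if_pos (Nat.zero_mod 2)]
    exact h₀₂.symm
  · rw [if_neg h, ZMod.val_add_of_lt (by omega), Nat.add_div_right _ hpos]
    split_ifs <;> first | omega | assumption | exact h₀₁.symm

/-- The mixed difference in the prism of pure difference `d`. -/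
def rungDiff (D k : ℕ) (d : ZMod c) : ZMod c := if d = 1 then -(2 * D + k) else d + 2 * D

lemma exists_intCast_eq_rungDiff [NeZero c] (D k : ℕ) {d : ZMod c} (hd : 1 ≤ d.val)
    (hlt : 2 * d.val < c) : ∃ z : ℤ, rungDiff D k d = z ∧
      (d.val = 1 ∧ z = -(2 * D + k) ∨ 2 ≤ d.val ∧ z = d.val + 2 * D) := by
  by_cases h : d = 1
  · refine ⟨-(2 * D + k), by simp [rungDiff, h], .inl ⟨?_, rfl⟩⟩
    rw [h, ZMod.val_one'' (by omega)]
  · refine ⟨d.val + 2 * D, by simp [rungDiff, h], .inr ⟨?_, rfl⟩⟩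
    have : d.val ≠ 1 := fun hval => h (by rw [← ZMod.natCast_zmod_val d, hval, Nat.cast_one])
    omega

lemma IsAdmissible.rungDiff_injOn [NeZero c] (h : IsAdmissible c m D k) {d d' : ZMod c}
    (hd : IsPrism c m D d) (hd' : IsPrism c m D d') (heq : rungDiff D k d = rungDiff D k d') :
    d = d' := by
  obtain ⟨-, -, hm, hc⟩ := h
  obtain ⟨hpos, hlt, -⟩ := hd
  obtain ⟨hpos', hlt', -⟩ := hd'
  obtain ⟨z, hz, hcases⟩ := exists_intCast_eq_rungDiff D k hpos hlt
  obtain ⟨z', hz', hcases'⟩ := exists_intCast_eq_rungDiff D k hpos' hlt'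
  have := eq_of_intCast_zmod_eq (hz.symm.trans (heq.trans hz')) (by omega) (by omega)
  exact ZMod.val_injective c (by omega)

lemma IsAdmissible.rungDiff_ne [NeZero c] (h : IsAdmissible c m D k) {d δ e : ZMod c}
    (hd : IsPrism c m D d) (he : (δ, e) ∈ triangles c m D) : rungDiff D k d ≠ e := by
  obtain ⟨-, -, hm, hc⟩ := h
  obtain ⟨hpos, hlt, -⟩ := hd
  obtain ⟨z, hz, hcases⟩ := exists_intCast_eq_rungDiff D k hpos hlt
  obtain ⟨x, y, ⟨hy, hx⟩, rfl, rfl⟩ := mem_triangles.1 he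
  intro heq
  have := eq_of_intCast_zmod_eq (hz.symm.trans heq) (by omega) (by omega)
  omega

lemma IsAdmissible.rungDiff_ne_neg [NeZero c] (h : IsAdmissible c m D k) {d δ e : ZMod c}
    (hd : IsPrism c m D d) (he : (δ, e) ∈ triangles c m D) : rungDiff D k d ≠ -e := by
  obtain ⟨-, -, hm, hc⟩ := h
  obtain ⟨hpos, hlt, -⟩ := hd
  obtain ⟨z, hz, hcases⟩ := exists_intCast_eq_rungDiff D k hpos hlt
  obtain ⟨x, y, ⟨hy, hx⟩, rfl, rfl⟩ := mem_triangles.1 he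
  intro heq
  rw [← Int.cast_neg] at heq
  have := eq_of_intCast_zmod_eq (hz.symm.trans heq) (by omega) (by omega)
  omega

/-- The prism data of index `k` on `ZMod c`. -/
def IsAdmissible.prismData [NeZero c] (h : IsAdmissible c m D k) : PrismData (ZMod c) where
  triangles := triangles c m D
  IsPrism := IsPrism c m D
  colour := colour
  rungDiff := rungDiff D k
  triangles_neg := triangles_neg
  mixed_unique := h.mixed_unique
  pure_unique := h.pure_unique
  neg_mixed_notMem := h.neg_mixed_notMem
  pure_ne_zero := h.pure_ne_zero
  prism_ne_zero := IsPrism.ne_zero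
  not_isPrism_neg := IsPrism.not_neg
  prism_notMem := h.prism_notMem
  pure_cover _ := pure_cover h.odd
  colour_ne := colour_ne
  rungDiff_injOn := h.rungDiff_injOn
  rungDiff_ne := h.rungDiff_ne
  rungDiff_ne_neg := h.rungDiff_ne_neg

lemma colour_natCast {n : ℕ} (hn : n < c) (d : ZMod c) : colour d (n : ZMod c) =
    if c ≤ n + d.val then 2 else if n / d.val % 2 = 0 then 0 else 1 := by
  rw [colour, ZMod.val_cast_of_lt hn]

lemma exists_lt_colour_eq {d : ZMod c} (hd : 1 ≤ d.val) (hlt : 2 * d.val < c) (hc : 5 ≤ c)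
    (hhalf : 2 * d.val + 1 ≠ c) {κ : ZMod 3} (hκ : d.val ≠ 1 ∨ κ ≠ 2) :
    ∃ n n', n < n' ∧ n' < c ∧ colour d (n : ZMod c) = κ ∧ colour d (n' : ZMod c) = κ := by
  have hval {n : ℕ} (q : ℕ) (hn : n + d.val < c) (hq : n / d.val = q) :
      colour d (n : ZMod c) = if q % 2 = 0 then 0 else 1 := by
    rw [colour_natCast (by omega), if_neg (by omega), hq]
  have hcases : κ = 0 ∨ κ = 1 ∨ κ = 2 := by clear hκ; decide +revert
  rcases Nat.eq_or_lt_of_le hd with hd₁ | hd₁ <;> rcases hcases with rfl | rfl | rfl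
  · exact ⟨0, 2, by omega, by omega, hval 0 (by omega) (by simp),
      hval 2 (by omega) (by simp [← hd₁])⟩
  · exact ⟨1, 3, by omega, by omega, hval 1 (by omega) (by simp [← hd₁]),
      hval 3 (by omega) (by simp [← hd₁])⟩
  · exact absurd hd₁.symm (hκ.resolve_right (not_not.2 rfl))
  · exact ⟨0, 1, by omega, by omega, hval 0 (by omega) (by simp),
      hval 0 (by omega) (Nat.div_eq_of_lt hd₁)⟩
  · refine ⟨d.val, d.val + 1, by omega, by omega, hval 1 (by omega) (Nat.div_self hd),
      hval 1 (by omega) ?_⟩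
    rw [Nat.add_div_left _ hd, Nat.div_eq_of_lt hd₁]
  · refine ⟨c - 2, c - 1, by omega, by omega, ?_, ?_⟩ <;>
      rw [colour_natCast (by omega), if_pos (by omega)]

lemma exists_ne_colour_eq [NeZero c] {d : ZMod c} (hd : 1 ≤ d.val) (hlt : 2 * d.val < c)
    (hc : 5 ≤ c) (hhalf : 2 * d ≠ -1) {κ : ZMod 3} (hκ : d ≠ 1 ∨ κ ≠ 2) :
    ∃ i j, i ≠ j ∧ colour d i = κ ∧ colour d j = κ := by
  have hhalf' : 2 * d.val + 1 ≠ c := fun h => hhalf <| by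
    have hzero : ((2 * d.val + 1 : ℕ) : ZMod c) = 0 := by rw [h, ZMod.natCast_self]
    rw [Nat.cast_add, Nat.cast_mul, ZMod.natCast_zmod_val] at hzero
    exact eq_neg_of_add_eq_zero_left (by exact_mod_cast hzero)
  have hκ' : d.val ≠ 1 ∨ κ ≠ 2 := hκ.imp_left fun h hval =>
    h (by rw [← ZMod.natCast_zmod_val d, hval, Nat.cast_one])
  obtain ⟨n, n', hnn', hn', hn, hn''⟩ := exists_lt_colour_eq hd hlt hc hhalf' hκ'
  refine ⟨n, n', fun h => hnn'.ne ?_, hn, hn''⟩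
  rw [← ZMod.val_cast_of_lt (hnn'.trans hn'), h, ZMod.val_cast_of_lt hn']

lemma colour_one_eq_two_iff [NeZero c] (hc : 2 ≤ c) {i : ZMod c} : colour 1 i = 2 ↔ i = -1 := by
  have hi := ZMod.val_lt i
  have h₀₂ : (0 : ZMod 3) ≠ 2 := by decide
  have h₁₂ : (1 : ZMod 3) ≠ 2 := by decide
  have hneg : (-1 : ZMod c).val = c - 1 := by
    obtain ⟨n, rfl⟩ := Nat.exists_eq_add_of_le' hc
    exact ZMod.val_neg_one (n + 1)
  rw [← (ZMod.val_injective c).eq_iff, hneg, colour, ZMod.val_one'' (by omega)]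
  split_ifs
  · simp only [true_iff]
    omega
  · simp only [h₀₂, false_iff]
    omega
  · simp only [h₁₂, false_iff]
    omega

namespace IsAdmissible

lemma isPrism_one (h : IsAdmissible c m D k) : IsPrism c m D 1 := by
  obtain ⟨-, -, hm, hc⟩ := h
  rw [IsPrism, ZMod.val_one'' (by omega)]
  refine ⟨le_rfl, by omega, fun y hy => ?_⟩
  have := hy.2
  omega

lemma mem_triangles_one (h : IsAdmissible c m D k) :
    ((D : ZMod c), (1 : ZMod c)) ∈ triangles c m D :=
  mem_triangles.2 ⟨D, 1, ⟨by ring, .inl ⟨le_rfl, by have := h.one_le; omega⟩⟩, by simp, by simp⟩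

lemma edge_one_two_iff [NeZero c] (h : IsAdmissible c m D k) {i j : ZMod c} :
    h.prismData.Edge (.inl (1, 2)) (0, i) (0, j) ↔ i = -1 ∧ j = 0 ∨ i = 0 ∧ j = -1 := by
  have hc : 2 ≤ c := by
    have := h.two_mul_add_ten_le
    have := h.le
    omega
  have hsucc {i j : ZMod c} : j = i + 1 ∧ i = -1 ↔ i = -1 ∧ j = 0 := by
    rw [and_comm, and_congr_right_iff]
    rintro rfl
    rw [neg_add_cancel]
  rw [PrismData.edge_inl_mk_iff]
  change IsPrism c m D 1 ∧ (j = i + 1 ∧ colour 1 i = 2 ∨ i = j + 1 ∧ colour 1 j = 2) ↔ _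
  rw [and_iff_right h.isPrism_one, colour_one_eq_two_iff hc, colour_one_eq_two_iff hc, hsucc, hsucc,
    and_comm (b := i = 0)]

lemma prismEdge_rung [NeZero c] (h : IsAdmissible c m D k) :
    h.prismData.PrismEdge 1 2 (0, 1) (PrismData.rung (rungDiff D k 1) (0, 1)) := by
  obtain ⟨-, -, hm, hc⟩ := id h
  refine ⟨h.isPrism_one, .inr (.inr ⟨rfl, ?_⟩)⟩
  change colour (1 : ZMod c) 1 + colour 1 (1 - 1) + 2 = 0
  rw [sub_self, colour, colour, ZMod.val_zero, ZMod.val_one'' (by omega), if_neg (by omega),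
    if_neg (by omega), if_neg (by omega), if_pos (Nat.zero_mod 2)]
  decide

lemma eq_of_unique_edge [NeZero c] (h : IsAdmissible c m D k) {l : (ZMod c × ZMod 3) ⊕ ZMod c}
    {ε : ZMod 2} {p q : ZMod c} (hpq : h.prismData.Edge l (ε, p) (ε, q))
    (hunique : ∀ i j, h.prismData.Edge l (ε, i) (ε, j) → i = p ∧ j = q ∨ i = q ∧ j = p) :
    l = .inl (1, 2) ∧ (q - p = 1 ∨ q - p = -1) ∨ 2 * (q - p) = 1 ∨ 2 * (q - p) = -1 := by
  rcases l with ⟨d, κ⟩ | e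
  swap
  · exact absurd hpq PrismData.not_edge_inr_mk
  obtain ⟨hd, hcases⟩ := PrismData.edge_inl_mk_iff.1 hpq
  have hqp : q - p = d ∨ q - p = -d := by
    rcases hcases with ⟨rfl, -⟩ | ⟨rfl, -⟩
    · exact .inl (add_sub_cancel_left _ _)
    · exact .inr (sub_add_cancel_left _ _)
  by_cases hone : d = 1 ∧ κ = 2
  · obtain ⟨rfl, rfl⟩ := hone
    exact .inl ⟨rfl, hqp⟩
  by_cases hhalf : 2 * d = -1
  · rcases hqp with hqp | hqp
    · exact .inr (.inr (by rw [hqp, hhalf]))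
    · exact .inr (.inl (by rw [hqp, mul_neg, hhalf, neg_neg]))
  obtain ⟨-, -, hm, hc⟩ := id h
  obtain ⟨i, j, hij, hi, hj⟩ := exists_ne_colour_eq hd.1 hd.2.1 (by omega) hhalf
    (not_and_or.1 hone)
  obtain ⟨i, rfl⟩ := PrismData.exists_proj_eq (h.prismData.rungDiff d) ε i
  obtain ⟨j, rfl⟩ := PrismData.exists_proj_eq (h.prismData.rungDiff d) ε j
  have hne : i ≠ j := by
    rintro rfl
    exact hij rfl
  have hd₂ : q + d = p → p + d = q → False := fun hqp hpq => hd.ne_zero <|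
    (isUnit_two_zmod h.odd).mul_right_eq_zero.1 (by linear_combination hqp + hpq)
  rcases hunique i (i + d) (PrismData.edge_inl_mk_iff.2 ⟨hd, .inl ⟨rfl, hi⟩⟩) with
      ⟨rfl, hi⟩ | ⟨rfl, hi⟩ <;>
    rcases hunique j (j + d) (PrismData.edge_inl_mk_iff.2 ⟨hd, .inl ⟨rfl, hj⟩⟩) with
      ⟨rfl, hj⟩ | ⟨rfl, hj⟩
  · exact absurd rfl hne
  · exact (hd₂ hj hi).elim
  · exact (hd₂ hi hj).elim
  · exact absurd rfl hne

lemma two_mul_ne (h : IsAdmissible c m D k) {δ e : ZMod c} (he : (δ, e) ∈ triangles c m D) :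
    2 * e ≠ 1 ∧ 2 * e ≠ -1 := by
  obtain ⟨-, -, hm, hc⟩ := h
  obtain ⟨x, y, ⟨hy, hx⟩, -, rfl⟩ := mem_triangles.1 he
  constructor
  · intro hy
    have := eq_of_intCast_zmod_eq (x := 2 * y) (y := 1) (by exact_mod_cast hy) (by omega) (by omega)
    omega
  · intro hy
    have := eq_of_intCast_zmod_eq (x := 2 * y) (y := -1) (by exact_mod_cast hy) (by omega)
      (by omega)
    omega

lemma ne_neg_one_of_mul_mem_triangles (h : IsAdmissible c m D k) {u : ZMod c}
    (hu : (u * D, u) ∈ triangles c m D) : u ≠ -1 := by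
  rintro rfl
  obtain ⟨-, -, hm, hc⟩ := h
  obtain ⟨x, y, ⟨hy, hx⟩, hDx, h1y⟩ := mem_triangles.1 hu
  have := eq_of_intCast_zmod_eq (x := -D) (y := x) (by rw [← hDx]; push_cast; ring) (by omega)
    (by omega)
  have := eq_of_intCast_zmod_eq (x := -1) (y := y) (by exact_mod_cast h1y) (by omega) (by omega)
  omega

lemma rungDiff_one_eq (h : IsAdmissible c m D k) (h' : IsAdmissible c m D l)
    (heq : rungDiff (c := c) D k 1 = rungDiff D l 1) : k = l := by
  have hk := h.le
  have hl := h'.le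
  have hm := h.two_mul_add_ten_le
  rw [rungDiff, rungDiff, if_pos rfl, if_pos rfl, neg_inj] at heq
  have := eq_of_intCast_zmod_eq (c := c) (x := 2 * D + k) (y := 2 * D + l) (by exact_mod_cast heq)
    (by omega) (by omega)
  omega

lemma rungDiff_one_ne_neg (h : IsAdmissible c m D k) (h' : IsAdmissible c m D l) :
    rungDiff (c := c) D k 1 ≠ -rungDiff D l 1 := by
  intro heq
  have hk := h.le
  have hl := h'.le
  have hm := h.two_mul_add_ten_le
  rw [rungDiff, rungDiff, if_pos rfl, if_pos rfl, neg_neg] at heq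
  have := eq_of_intCast_zmod_eq (c := c) (x := -(2 * D + k)) (y := 2 * D + l)
    (by push_cast; exact heq) (by omega) (by omega)
  omega

lemma mul_mem_triangles [NeZero c] (h : IsAdmissible c m D k) (h' : IsAdmissible c m D l)
    {f : ZMod 2 × ZMod c → ZMod 2 × ZMod c} {ε₀ : ZMod 2} {u t : ZMod c}
    (hf : ∀ ε i, f (ε, i) = (ε + ε₀, u * i + t))
    (htri : ∀ a b e, h.prismData.Tri a b e → h'.prismData.Tri (f a) (f b) (f e)) :
    (u * D, u) ∈ triangles c m D := by
  have hD : h.prismData.Tri (0, 0) (0, D) (1, 1) := .inl ⟨rfl, rfl, by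
    change ((D : ZMod c) - 0, (1 : ZMod c) - 0) ∈ triangles c m D
    simpa only [sub_zero] using h.mem_triangles_one⟩
  have himage := htri _ _ _ hD
  rw [hf, hf, hf] at himage
  rcases himage with himage | himage | himage
  · simpa using (show _ ∈ triangles c m D from himage.2.2)
  · exact absurd himage.2.1 (ne_add_one_zmod_two _)
  · exact absurd himage.2.1 (ne_add_one_zmod_two _)

lemma eq_of_eq_add [NeZero c] (h : IsAdmissible c m D k) (h' : IsAdmissible c m D l)
    {f : ZMod 2 × ZMod c → ZMod 2 × ZMod c} {ε₀ : ZMod 2} {t : ZMod c}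
    (hf : ∀ ε i, f (ε, i) = (ε + ε₀, i + t))
    (hedge : ∀ a b, h.prismData.PrismEdge 1 2 a b ↔ h'.prismData.PrismEdge 1 2 (f a) (f b)) :
    k = l ∧ ε₀ = 0 ∧ t = 0 := by
  have hrung := ((hedge _ _).1 h.prismEdge_rung).of_fst_eq_add_one (by
    rw [hf, PrismData.rung, hf, add_right_comm])
  have hsnd := congrArg Prod.snd hrung.1
  rw [PrismData.rung, hf, hf, PrismData.rung] at hsnd
  change (if (0 : ZMod 2) = 0 then 1 + rungDiff D k 1 else 1 - rungDiff D k 1) + t =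
    if 0 + ε₀ = 0 then 1 + t + rungDiff D l 1 else 1 + t - rungDiff D l 1 at hsnd
  rw [if_pos rfl, zero_add] at hsnd
  rcases eq_or_eq_add_one_zmod_two 0 ε₀ with rfl | rfl
  · rw [if_pos rfl] at hsnd
    refine ⟨h.rungDiff_one_eq h' (by linear_combination hsnd), rfl, ?_⟩
    have hzero : h'.prismData.Edge (.inl (1, 2)) (0, -1 + t) (0, 0 + t) := by
      have := (hedge (0, -1) (0, 0)).1 (h.edge_one_two_iff.2 (.inl ⟨rfl, rfl⟩))
      rwa [hf, hf, add_zero] at this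
    rcases h'.edge_one_two_iff.1 hzero with ⟨-, ht⟩ | ⟨ht, ht'⟩
    · exact (zero_add t).symm.trans ht
    · exact absurd ((isUnit_two_zmod h.odd).mul_right_eq_zero.1
        (by linear_combination ht' - ht)) h.isPrism_one.ne_zero
  · rw [zero_add, if_neg one_ne_zero] at hsnd
    exact absurd (by linear_combination hsnd) (h.rungDiff_one_ne_neg h')

lemma eq_of_isAffine [NeZero c] (h : IsAdmissible c m D k) (h' : IsAdmissible c m D l)
    {f : Equiv.Perm (ZMod 2 × ZMod c)} (hf : IsAffine f)
    (htri : ∀ a b e, h.prismData.Tri a b e → h'.prismData.Tri (f a) (f b) (f e))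
    (hedge : ∃ y, ∀ a b, h.prismData.Edge (.inl (1, 2)) a b ↔ h'.prismData.Edge y (f a) (f b)) :
    k = l ∧ f = 1 := by
  obtain ⟨ε₀, u, t, hf⟩ := exists_eq_of_isAffine h.odd hf
  have hu := h.mul_mem_triangles h' hf htri
  obtain ⟨y, hedge⟩ := hedge
  have himage : h'.prismData.Edge y (0 + ε₀, u * -1 + t) (0 + ε₀, u * 0 + t) := by
    rw [← hf, ← hf, ← hedge, h.edge_one_two_iff]
    exact .inl ⟨rfl, rfl⟩
  have hunique i j (hij : h'.prismData.Edge y (0 + ε₀, i) (0 + ε₀, j)) :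
      i = u * -1 + t ∧ j = u * 0 + t ∨ i = u * 0 + t ∧ j = u * -1 + t := by
    have hpreimage i : ∃ i', f (0, i') = (0 + ε₀, i) := by
      obtain ⟨⟨ε, i'⟩, hi⟩ := f.surjective (0 + ε₀, i)
      obtain rfl : ε = 0 := add_right_cancel (congrArg Prod.fst ((hf _ _).symm.trans hi))
      exact ⟨i', hi⟩
    obtain ⟨i', hi⟩ := hpreimage i
    obtain ⟨j', hj⟩ := hpreimage j
    rw [← hi, ← hj, ← hedge, h.edge_one_two_iff] at hij
    obtain rfl : u * i' + t = i := congrArg Prod.snd ((hf _ _).symm.trans hi)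
    obtain rfl : u * j' + t = j := congrArg Prod.snd ((hf _ _).symm.trans hj)
    rcases hij with ⟨rfl, rfl⟩ | ⟨rfl, rfl⟩
    · exact .inl ⟨rfl, rfl⟩
    · exact .inr ⟨rfl, rfl⟩
  have hcases := h'.eq_of_unique_edge himage hunique
  rw [show u * 0 + t - (u * -1 + t) = u by ring] at hcases
  obtain ⟨rfl, hu₁⟩ := hcases.resolve_right (not_or.2 (h'.two_mul_ne hu))
  obtain rfl := hu₁.resolve_right (h'.ne_neg_one_of_mul_mem_triangles hu)
  simp only [one_mul] at hf
  obtain ⟨rfl, rfl, rfl⟩ := h.eq_of_eq_add h' hf hedge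
  exact ⟨rfl, Equiv.ext fun a => by rw [← Prod.mk.eta (p := a), hf]; simp⟩

end IsAdmissible

lemma exists_nsmul_one_one_eq (hc : Odd c) (a : ZMod 2 × ZMod c) :
    ∃ n : ℕ, n • ((1, 1) : ZMod 2 × ZMod c) = a := by
  have : NeZero c := ⟨hc.pos.ne'⟩
  have hc₁ : (c : ZMod 2) = 1 := ZMod.natCast_eq_one_iff_odd.2 hc
  rcases eq_or_eq_add_one_zmod_two (a.2.val : ZMod 2) a.1 with ha | ha
  · exact ⟨a.2.val, Prod.ext (by simp [ha]) (by simp)⟩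
  · exact ⟨a.2.val + c, Prod.ext (by simp [ha, hc₁]) (by simp)⟩

open scoped Pointwise in
theorem IsAdmissible.isGenerating [NeZero c] (h : IsAdmissible c m D k) {X : Type*}
    (θ : X ≃ {l // h.prismData.Valid l}) {n : ℕ} (hn : n.factorial ∣ D) :
    (h.prismData.holedRelation θ).toHoledSystem.IsGenerating n := by
  rintro S ⟨s₀, hs₀⟩ hS hindex
  set K := AddAction.stabilizer (ZMod 2 × ZMod c) S
  have hD : ((0, D) : ZMod 2 × ZMod c) ∈ K := by
    have hpos := Nat.pos_of_ne_zero K.index_ne_zero_of_finite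
    obtain ⟨q, rfl⟩ := (Nat.dvd_factorial hpos hindex).trans hn
    simpa using K.nsmul_index_mem ((0, q) : ZMod 2 × ZMod c)
  have hsucc : ∀ s ∈ S, s + (1, 1) ∈ S := fun s hs => by
    have htri : h.prismData.Tri s ((0, (D : ZMod c)) + s) (s + (1, 1)) := by
      refine .inl ⟨zero_add _, rfl, ?_⟩
      rw [Prod.snd_add, Prod.snd_add, add_sub_cancel_right, add_sub_cancel_left]
      exact h.mem_triangles_one
    exact hS s hs _ ((AddAction.mem_stabilizer_set.1 hD s).2 hs) _
      ((HoledRelation.third_eq_iff htri.ne).2 htri)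
  have hmul (n : ℕ) : s₀ + n • (1, 1) ∈ S := by
    induction n with
    | zero => rwa [zero_nsmul, add_zero]
    | succ n ih => simpa only [succ_nsmul, ← add_assoc] using hsucc _ ih
  refine Set.eq_univ_of_forall fun a => ?_
  obtain ⟨n, hn⟩ := exists_nsmul_one_one_eq h.odd (a - s₀)
  simpa only [hn, add_sub_cancel] using hmul n

theorem exists_isRigidFamily {κ X : Type*} [Fintype κ] [Fintype X] [NeZero c] {n : ℕ}
    (h : IsAdmissible c m D (Fintype.card κ)) (hn : n.factorial ∣ D)
    (hX : Fintype.card X + 6 * m + 1 = 2 * c) :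
    ∃ H : κ → HoledSystem X (ZMod 2 × ZMod c),
      (∀ k, (H k).IsGenerating n) ∧ HoledSystem.IsRigidFamily H := by
  have hadm (k : κ) : IsAdmissible c m D (Fintype.equivFin κ k) := h.mono (Fin.is_le' ..)
  let θ (k : κ) : X ≃ {l // (hadm k).prismData.Valid l} := Fintype.equivOfCardEq <| by
    have hcard := (hadm k).prismData.card_valid
    have htri : #(hadm k).prismData.triangles = 2 * m := (hadm k).card_triangles
    rw [htri, ZMod.card] at hcard
    omega
  let R k := (hadm k).prismData.holedRelation (θ k)
  refine ⟨fun k => (R k).toHoledSystem, fun k => (hadm k).isGenerating (θ k) hn,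
    fun k l f ρ hρ hf hmap => ?_⟩
  have hrel a b z := HoledRelation.rel_map_iff (R := R k) (R' := R l) f.injective hρ hmap
    (a := a) (b := b) (z := z)
  let x : X := (θ k).symm ⟨.inl (1, 2), (hadm k).isPrism_one⟩
  have hx : (θ k x).1 = .inl (1, 2) := by rw [Equiv.apply_symm_apply]
  obtain ⟨hkl, hf₁⟩ := (hadm k).eq_of_isAffine (hadm l) hf
    (fun a b e => (hrel a b (.inr e)).2)
    ⟨(θ l (ρ x)).1, fun a b => by rw [← hx]; exact (hrel a b (.inl x)).symm⟩
  exact ⟨(Fintype.equivFin κ).injective (Fin.ext hkl), hf₁⟩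

end CyclicPrism

/-! ### Coloured projective spaces -/

section Projective

variable {W : Type*} [AddCommGroup W] [Module (ZMod 2) W]

variable (W) in
/-- The Steiner quasigroup of the projective space of a vector space over `ZMod 2`, whose points
are the nonzero vectors. -/
def projectiveQuasigroup : SteinerQuasigroup {w : W // w ≠ 0} where
  op v w := if h : v = w then v else
    ⟨v.1 + w.1, fun hvw => h <| Subtype.ext <| by rwa [← sub_eq_zero, ZModModule.sub_eq_add]⟩
  op_self v := dif_pos rfl
  op_comm v w := by
    by_cases h : v = w
    · rw [h]
    · rw [dif_neg h, dif_neg (Ne.symm h)]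
      exact Subtype.ext (add_comm _ _)
  op_op v w := by
    by_cases h : v = w
    · rw [dif_pos h, dif_pos rfl, h]
    · have hvw : v.1 + (v.1 + w.1) = w.1 := by rw [← add_assoc, ZModModule.add_self, zero_add]
      rw [dif_neg h, dif_neg]
      · exact Subtype.ext hvw
      · exact fun hv => w.2 (left_eq_add.1 (congrArg Subtype.val hv))

lemma coe_projectiveQuasigroup_op {v w : {w : W // w ≠ 0}} (h : v ≠ w) :
    ((projectiveQuasigroup W).op v w : W) = v + w :=
  congrArg Subtype.val (dif_neg h)

lemma exists_addMonoidHom_of_mem_autSubgroup {g : Equiv.Perm {w : W // w ≠ 0}}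
    (hg : g ∈ (projectiveQuasigroup W).autSubgroup) : ∃ φ : W →+ W, ∀ v, φ v.1 = g v := by
  let φ (w : W) : W := if h : w ≠ 0 then (g ⟨w, h⟩).1 else 0
  have hφ v : φ v.1 = g v := dif_pos v.2
  have hφ₀ : φ 0 = 0 := dif_neg (not_not.2 rfl)
  refine ⟨{ toFun := φ, map_zero' := hφ₀, map_add' := fun v w => ?_ }, hφ⟩
  by_cases hv : v = 0
  · rw [hv, hφ₀, zero_add, zero_add]
  by_cases hw : w = 0
  · rw [hw, hφ₀, add_zero, add_zero]
  by_cases hvw : v = w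
  · rw [hvw, ZModModule.add_self, ZModModule.add_self, hφ₀]
  have hne : (⟨v, hv⟩ : {w : W // w ≠ 0}) ≠ ⟨w, hw⟩ := fun h => hvw (congrArg Subtype.val h)
  have hop := congrArg Subtype.val (hg ⟨v, hv⟩ ⟨w, hw⟩)
  rwa [← hφ, coe_projectiveQuasigroup_op hne, coe_projectiveQuasigroup_op (g.injective.ne hne),
    ← hφ, ← hφ] at hop

end Projective

lemma card_ne_zero_add_one (β : Type*) [Fintype β] :
    Fintype.card {w : β → ZMod 2 // w ≠ 0} + 1 = 2 ^ Fintype.card β := by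
  have hcard := Fintype.card_subtype_compl (fun w : β → ZMod 2 => w = 0)
  rw [Fintype.card_subtype_eq, Fintype.card_fun, ZMod.card] at hcard
  have := Nat.two_pow_pos (Fintype.card β)
  simp only [ne_eq]
  omega

section CoordinatePermutation

attribute [local instance] arrowAction

variable {G β : Type*} [Group G] [MulAction G β]

lemma smul_single_one (g : G) (b : β) :
    g • (Pi.single b 1 : β → ZMod 2) = Pi.single (g • b) 1 := by
  ext a
  change (Pi.single b 1 : β → ZMod 2) (g⁻¹ • a) = _
  simp only [Pi.single_apply, inv_smul_eq_iff]

lemma single_one_injective : (fun b => (Pi.single b 1 : β → ZMod 2)).Injective := fun a b h => by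
  by_contra hab
  simpa [hab] using congrFun h a

section Orbit

variable {φ : (β → ZMod 2) →+ (β → ZMod 2)} {x y b : β}

lemma map_single_eq_of_map_single_eq (hφ : ∀ w, φ w ∈ MulAction.orbit G w)
    (hx : (· • x : G → β).Injective) (hb : b ∉ MulAction.orbit G x) {g : G}
    (hg : φ (Pi.single x 1) = Pi.single (g • x) 1) :
    φ (Pi.single b 1) = Pi.single (g • b) 1 := by
  obtain ⟨h, hxb⟩ := hφ (Pi.single x 1 + Pi.single b 1)
  change h • (Pi.single x 1 : β → ZMod 2) + h • (Pi.single b 1 : β → ZMod 2) = φ _ at hxb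
  rw [smul_single_one, smul_single_one, map_add, hg] at hxb
  obtain ⟨k, hk⟩ := hφ (Pi.single b 1)
  change k • (Pi.single b 1 : β → ZMod 2) = φ _ at hk
  rw [smul_single_one] at hk
  have hne (k : G) : g • x ≠ k • b := fun h => hb <| by
    rw [← inv_smul_smul k b, ← h, smul_smul]
    exact MulAction.mem_orbit x _
  have hgh : g • x = h • x := by
    have := congrFun hxb (g • x)
    rw [← hk, Pi.add_apply, Pi.add_apply, Pi.single_eq_same, Pi.single_eq_of_ne (hne h),
      Pi.single_eq_of_ne (hne k)] at this
    by_contra hgh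
    rw [Pi.single_eq_of_ne hgh] at this
    exact zero_ne_one (add_right_cancel this)
  rw [← hx hgh] at hxb
  exact (add_left_cancel hxb).symm

theorem exists_forall_eq_smul [Finite β] (hφ : ∀ w, φ w ∈ MulAction.orbit G w)
    (hx : (· • x : G → β).Injective) (hy : (· • y : G → β).Injective)
    (hxy : y ∉ MulAction.orbit G x) : ∃ g : G, ∀ w, φ w = g • w := by
  obtain ⟨g, hg⟩ := hφ (Pi.single x 1)
  have hgx : φ (Pi.single x 1) = Pi.single (g • x) 1 := hg.symm.trans (smul_single_one g x)
  have hgy := map_single_eq_of_map_single_eq hφ hx hxy hgx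
  have hgb b : φ (Pi.single b 1) = Pi.single (g • b) 1 := by
    by_cases hb : b ∈ MulAction.orbit G x
    · refine map_single_eq_of_map_single_eq hφ hy (fun hb' => hxy ?_) hgy
      rw [← MulAction.orbit_eq_iff.2 hb, MulAction.orbit_eq_iff.2 hb']
      exact MulAction.mem_orbit_self y
    · exact map_single_eq_of_map_single_eq hφ hx hb hgx
  let ψ : (β → ZMod 2) →+ (β → ZMod 2) :=
    { toFun := fun w => g • w, map_zero' := rfl, map_add' := fun _ _ => rfl }
  suffices φ = ψ from ⟨g, DFunLike.congr_fun this⟩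
  refine AddMonoidHom.functions_ext _ _ _ fun b ε => ?_
  rcases eq_or_eq_add_one_zmod_two 0 ε with rfl | rfl
  · rw [Pi.single_zero, map_zero, map_zero]
  · exact (hgb b).trans (smul_single_one g b).symm

end Orbit

variable (G β)

/-- The action on the projective space over `ZMod 2` by permutations of the coordinates. -/
def coordinatePerm : G →* Equiv.Perm {w : β → ZMod 2 // w ≠ 0} :=
  MonoidHom.toHomPerm
    { toFun := fun g w => ⟨g • w.1, (MulAction.injective g).ne w.2⟩
      map_one' := funext fun w => Subtype.ext (one_smul G w.1)
      map_mul' := fun g h => funext fun w => Subtype.ext (mul_smul g h w.1) }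

/-- The colouring of the points of the projective space by their orbits under permutations of the
coordinates. -/
def orbitColour (w : {w : β → ZMod 2 // w ≠ 0}) : MulAction.orbitRel.Quotient G (β → ZMod 2) :=
  Quotient.mk _ w.1

variable {G β}

lemma coe_coordinatePerm (g : G) (w : {w : β → ZMod 2 // w ≠ 0}) :
    (coordinatePerm G β g w : β → ZMod 2) = g • w.1 := rfl

lemma orbitColour_eq_iff {v w : {w : β → ZMod 2 // w ≠ 0}} :
    orbitColour G β v = orbitColour G β w ↔ v.1 ∈ MulAction.orbit G w.1 :=
  Quotient.eq.trans MulAction.orbitRel_apply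

lemma coordinatePerm_mem_colourAut (g : G) :
    coordinatePerm G β g ∈ (projectiveQuasigroup (β → ZMod 2)).colourAut (orbitColour G β) := by
  refine ⟨fun v w => ?_, fun w => orbitColour_eq_iff.2 ⟨g, rfl⟩⟩
  by_cases hvw : v = w
  · rw [hvw, SteinerQuasigroup.op_self, SteinerQuasigroup.op_self]
  · refine Subtype.ext ?_
    rw [coe_coordinatePerm, coe_projectiveQuasigroup_op hvw,
      coe_projectiveQuasigroup_op ((coordinatePerm G β g).injective.ne hvw)]
    rfl

lemma coordinatePerm_injective {x : β} (hx : (· • x : G → β).Injective) :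
    Function.Injective (coordinatePerm G β) := fun g h hgh => by
  have hne : (Pi.single x 1 : β → ZMod 2) ≠ 0 := fun h => by simpa using congrFun h x
  have hsingle := congrArg Subtype.val (DFunLike.congr_fun hgh ⟨_, hne⟩)
  rw [coe_coordinatePerm, coe_coordinatePerm, smul_single_one, smul_single_one] at hsingle
  exact hx (single_one_injective hsingle)

theorem nonempty_mulEquiv_colourAut_orbitColour [Finite β] {x y : β}
    (hx : (· • x : G → β).Injective) (hy : (· • y : G → β).Injective)
    (hxy : y ∉ MulAction.orbit G x) : Nonempty
      (G ≃* (projectiveQuasigroup (β → ZMod 2)).colourAut (orbitColour G β)) := by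
  have hrange : (coordinatePerm G β).range =
      (projectiveQuasigroup (β → ZMod 2)).colourAut (orbitColour G β) := by
    refine le_antisymm ?_ fun g hg => ?_
    · rintro _ ⟨g, rfl⟩
      exact coordinatePerm_mem_colourAut g
    obtain ⟨φ, hφ⟩ := exists_addMonoidHom_of_mem_autSubgroup hg.1
    have horbit w : φ w ∈ MulAction.orbit G w := by
      by_cases hw : w = 0
      · rw [hw, map_zero]
        exact MulAction.mem_orbit_self 0
      · exact hφ ⟨w, hw⟩ ▸ orbitColour_eq_iff.1 (hg.2 ⟨w, hw⟩)
    obtain ⟨h, hh⟩ := exists_forall_eq_smul horbit hx hy hxy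
    exact ⟨h, Equiv.ext fun w => Subtype.ext (by rw [coe_coordinatePerm, ← hh, hφ])⟩
  exact ⟨(MonoidHom.ofInjective (coordinatePerm_injective hx)).trans
    (MulEquiv.subgroupCongr hrange)⟩

end CoordinatePermutation

lemma exists_order_parameters {N u : ℕ} (hN : 0 < N) (hN₂ : Even N)
    (hu : N % 3 = 1 ∧ u % 6 = 1 ∨ N % 3 = 2 ∧ u % 6 = 3) :
    ∃ m c : ℕ, N ≤ m ∧ m < 2 * N ∧ u + 1 + 6 * m = N * c ∧ c % 6 = 5 := by
  have hN₃ : Nat.Coprime 3 N := (Nat.Prime.coprime_iff_not_dvd Nat.prime_three).2 (by omega)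
  obtain ⟨M, hM⟩ := hN₂
  obtain ⟨s, hs⟩ : ∃ s : ℤ, 2 * s = N - (u + 1) := ⟨(N - (u + 1)) / 2, by omega⟩
  obtain ⟨t, ht⟩ := Int.mod_coprime hN₃
  obtain ⟨z, hzN, hz⟩ := Int.existsUnique_equiv_nat (t * s) (b := N) (by omega)
  have h3z : (3 * z : ℤ) ≡ s [ZMOD N] :=
    calc (3 * z : ℤ) ≡ 3 * (t * s) [ZMOD N] := hz.mul_left 3
      _ = 3 * t * s := (mul_assoc _ _ _).symm
      _ ≡ 1 * s [ZMOD N] := ht.mul_right s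
      _ = s := one_mul s
  obtain ⟨q, hq⟩ := h3z.symm.dvd
  have hprod : (u + 1 + 6 * (N + z) : ℤ) = N * (2 * q + 7) := by linear_combination 2 * hq + hs
  obtain ⟨c, hc⟩ : ∃ c : ℕ, (c : ℤ) = 2 * q + 7 :=
    ⟨(2 * q + 7).toNat, Int.toNat_of_nonneg (pos_of_mul_pos_right (hprod ▸ by positivity)
      (Int.natCast_nonneg N)).le⟩
  have hNc : u + 1 + 6 * (N + z) = N * c := by
    rw [← hc] at hprod
    exact_mod_cast hprod
  have hmod : (u + 1) % 3 = N % 3 * (c % 3) % 3 := by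
    rw [← Nat.mul_mod, ← hNc]
    omega
  have hc₃ : c % 3 = 2 := by
    rcases hu with ⟨hN, hu⟩ | ⟨hN, hu⟩ <;> rw [hN] at hmod <;> omega
  exact ⟨N + z, c, by omega, by omega, hNc, by omega⟩

theorem exists_isSTS_of_colourAut {V κ : Type*} [Fintype V] [Nontrivial V] [Finite κ]
    (S : SteinerQuasigroup V) (col : V → κ) : ∃ M, ∀ u, M ≤ u →
      ((Fintype.card V + 1) * 2 % 3 = 1 ∧ u % 6 = 1 ∨
        (Fintype.card V + 1) * 2 % 3 = 2 ∧ u % 6 = 3) →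
      ∃ T : Finset (Finset (Fin u)), IsSTS T ∧ Nonempty (S.colourAut col ≃* autGroup T) := by
  have := Fintype.ofFinite κ
  set N := (Fintype.card V + 1) * 2 with hN
  set D := (4 * N + 10).factorial
  have hND : 4 * N + 10 ≤ D := Nat.self_le_factorial _
  refine ⟨N * (20 * D + 4 * Fintype.card κ), fun u hMu hu => ?_⟩
  obtain ⟨m, c, hNm, hmN, huc, hc⟩ := exists_order_parameters (N := N) (by omega)
    (even_two.mul_left _) hu
  have hDc : 20 * D + 4 * Fintype.card κ ≤ c :=
    Nat.le_of_mul_le_mul_left (by omega) (by omega : 0 < N)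
  have hadm : CyclicPrism.IsAdmissible c m D (Fintype.card κ) :=
    ⟨Nat.odd_iff.2 (by omega), by omega, by omega, hDc⟩
  have : NeZero c := ⟨by omega⟩
  let X := Fin (2 * c - 1 - 6 * m)
  have hX : Fintype.card X + 6 * m + 1 = 2 * c := by
    rw [Fintype.card_fin]
    omega
  obtain ⟨SX⟩ := nonempty_steinerQuasigroup (X := X) (k := (2 * c - 1 - 6 * m) / 6) (by omega)
  obtain ⟨H, hgen, hrigid⟩ := CyclicPrism.exists_isRigidFamily hadm
    (Nat.factorial_dvd_factorial (by omega : Fintype.card V ≤ 4 * N + 10)) hX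
  have hA : Fintype.card (ZMod 2 × ZMod c) = 2 * c := by
    rw [Fintype.card_prod, ZMod.card, ZMod.card]
  obtain ⟨e⟩ := nonempty_colourAut_mulEquiv_moore (SX := SX) (SV := S) (col := col) hgen hrigid
    (by omega)
  have hcard : Fintype.card (X ⊕ V × (ZMod 2 × ZMod c)) = u := by
    rw [Fintype.card_sum, Fintype.card_prod, hA]
    have : N * c = Fintype.card V * (2 * c) + 2 * c := by rw [hN]; ring
    omega
  obtain ⟨T, hT, ⟨eT⟩⟩ := (mooreQuasigroup SX S H col).exists_isSTS_fin hcard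
  exact ⟨T, hT, ⟨e.trans eT⟩⟩

theorem exists_isSTS_of_mulAction {G β : Type*} [Group G] [MulAction G β] [Fintype β] {x y : β}
    (hx : (· • x : G → β).Injective) (hy : (· • y : G → β).Injective)
    (hxy : y ∉ MulAction.orbit G x) : ∃ M, ∀ u, M ≤ u →
      (Odd (Fintype.card β) ∧ u % 6 = 1 ∨ Even (Fintype.card β) ∧ u % 6 = 3) →
      ∃ T : Finset (Finset (Fin u)), IsSTS T ∧ Nonempty (G ≃* autGroup T) := by
  obtain ⟨e⟩ := nonempty_mulEquiv_colourAut_orbitColour hx hy hxy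
  have hβ : 2 ≤ Fintype.card β := Fintype.one_lt_card_iff.2
    ⟨x, y, fun h => hxy (h ▸ MulAction.mem_orbit_self x)⟩
  have hV := card_ne_zero_add_one β
  have : Nontrivial {w : β → ZMod 2 // w ≠ 0} := Fintype.one_lt_card_iff_nontrivial.1 <| by
    have := Nat.pow_le_pow_right two_pos hβ
    omega
  obtain ⟨M, hM⟩ := exists_isSTS_of_colourAut (projectiveQuasigroup (β → ZMod 2))
    (orbitColour G β)
  rw [hV] at hM
  have heven {n : ℕ} (hn : Even n) : 2 ^ n % 3 = 1 := by
    obtain ⟨k, rfl⟩ := hn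
    rw [← two_mul, pow_mul, Nat.pow_mod]
    exact congrArg (· % 3) (Nat.one_pow k)
  refine ⟨M, fun u hMu hu => ?_⟩
  obtain ⟨T, hT, ⟨eT⟩⟩ := hM u hMu <| hu.imp
    (And.imp_left fun h => by rw [← pow_succ]; exact heven h.add_one)
    (And.imp_left fun h => by have := heven h; omega)
  exact ⟨T, hT, ⟨e.trans eT⟩⟩

/-- **Theorem 1.1.** If `G` is a finite group then there is an integer `M_G` such
that, for `u ≥ M_G` and `u ≡ 1` or `3 (mod 6)`, there is a Steiner triple system on
`u` points whose automorphism group is isomorphic to `G`. -/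
theorem stmt0 (G : Type*) [Group G] [Fintype G] :
    ∃ M : ℕ, ∀ u : ℕ, M ≤ u → u % 6 = 1 ∨ u % 6 = 3 →
      ∃ T : Finset (Finset (Fin u)), IsSTS T ∧ Nonempty (G ≃* autGroup T) := by
  obtain ⟨M₁, h₁⟩ := exists_isSTS_of_mulAction (G := G) (β := Option (G ⊕ G))
    (x := some (.inl 1)) (y := some (.inr 1)) (fun g h hgh => by simpa using hgh)
    (fun g h hgh => by simpa using hgh) (by simp [MulAction.mem_orbit_iff])
  obtain ⟨M₃, h₃⟩ := exists_isSTS_of_mulAction (G := G) (β := G ⊕ G) (x := .inl 1) (y := .inr 1)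
    (fun g h hgh => by simpa using hgh) (fun g h hgh => by simpa using hgh)
    (by simp [MulAction.mem_orbit_iff])
  have heven : Even (Fintype.card (G ⊕ G)) := ⟨_, Fintype.card_sum⟩
  refine ⟨M₁ + M₃, fun u hM hu => ?_⟩
  rcases hu with hu | hu
  · exact h₁ u (by omega) (.inl ⟨by rw [Fintype.card_option]; exact heven.add_one, hu⟩)
  · exact h₃ u (by omega) (.inr ⟨heven, hu⟩)

end
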